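/- Let B be a basic indecomposable artin algebra and Γ a sincere cycle-finite finite connected component of the cyclic quiver _cΓ_B. Then for every path I = X_0 → X_1 → ⋯ → X_{m-1} → X_m = P of nonzero nonisomorphisms in ind B from an indecomposable injective module I to an indecomposable projective module P, all the modules X_0, X_1, …, X_m belong to Γ. -/

import Mathlib

/-!
Common framework: finite length modules over a ring, the radical of the module
category, cycles of indecomposable modules, Auslander-Reiten quivers,
translation quivers notions, and classes of artin algebras.
Right `A`-modules are formalized as left `Aᵐᵒᵖ`-modules.
-/

universe u

/-- A bundled object of `mod R`: a finite length `R`-module. -/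
structure ModA (R : Type u) [Ring R] : Type (u + 1) where
  M : Type u
  [acg : AddCommGroup M]
  [mod : Module R M]
  finLen : IsFiniteLength R M

attribute [instance] ModA.acg ModA.mod

/-- A bundled (not necessarily finite length) `R`-module. -/
structure RawMod (R : Type u) [Ring R] : Type (u + 1) where
  M : Type u
  [acg : AddCommGroup M]
  [mod : Module R M]

attribute [instance] RawMod.acg RawMod.mod

/-- A module is indecomposable iff it is nonzero and its endomorphism ring has no
nontrivial idempotents. -/
def IsIndecMod (R : Type u) [Ring R] (M : Type u) [AddCommGroup M] [Module R M] : Prop :=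
  Nontrivial M ∧ ∀ f : Module.End R M, f * f = f → f = 0 ∨ f = 1

namespace ModA

variable {R : Type u} [Ring R]

/-- Indecomposability of an object of `mod R`. -/
def IsIndec (X : ModA R) : Prop := IsIndecMod R X.M

/-- Isomorphism of objects of `mod R`. -/
def Iso (X Y : ModA R) : Prop := Nonempty (X.M ≃ₗ[R] Y.M)

end ModA

/-- Membership in the radical `rad(X, Y)` of the category `mod R`: a map `f : X → Y`
belongs to the radical iff for every indecomposable `Z` and all `g : Z → X`, `h : Y → Z`
the composite `h ∘ f ∘ g` is not an isomorphism. -/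
def InRad {R : Type u} [Ring R] {X Y : ModA R} (f : X.M →ₗ[R] Y.M) : Prop :=
  ∀ Z : ModA R, Z.IsIndec → ∀ (g : Z.M →ₗ[R] X.M) (h : Y.M →ₗ[R] Z.M),
    ¬Function.Bijective (h.comp (f.comp g))

/-- The powers `rad^n` of the radical of `mod R`. -/
def radPow (R : Type u) [Ring R] : ℕ → ∀ X Y : ModA R, AddSubgroup (X.M →ₗ[R] Y.M)
  | 0, _, _ => ⊤
  | n + 1, X, Y => AddSubgroup.closure
      {f | ∃ (Z : ModA R) (g : X.M →ₗ[R] Z.M) (h : Z.M →ₗ[R] Y.M),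
        InRad g ∧ h ∈ radPow R n Z Y ∧ f = h.comp g}

/-- Membership in the infinite radical `rad^∞ = ⋂ₙ radⁿ` of `mod R`. -/
def InRadInf {R : Type u} [Ring R] {X Y : ModA R} (f : X.M →ₗ[R] Y.M) : Prop :=
  ∀ n : ℕ, f ∈ radPow R n X Y

/-- A cycle in `ind R`: a sequence of nonzero nonisomorphisms
`M₀ → M₁ → ⋯ → M_{r-1} → M_r = M₀` between indecomposable modules. -/
structure ModCycle (R : Type u) [Ring R] : Type (u + 1) where
  len : ℕ
  len_pos : 0 < len
  obj : Fin (len + 1) → ModA R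
  obj_indec : ∀ i, (obj i).IsIndec
  closed : obj (Fin.last len) = obj 0
  hom : ∀ i : Fin len, (obj i.castSucc).M →ₗ[R] (obj i.succ).M
  hom_ne_zero : ∀ i, hom i ≠ 0
  hom_not_iso : ∀ i, ¬Function.Bijective (hom i)

/-- A cycle is finite if none of its homomorphisms lies in the infinite radical. -/
def ModCycle.IsFiniteCycle {R : Type u} [Ring R] (c : ModCycle R) : Prop :=
  ∀ i, ¬InRadInf (c.hom i)

/-- The cycle passes through the module `M`. -/
def ModCycle.Passes {R : Type u} [Ring R] (c : ModCycle R) (M : ModA R) : Prop :=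
  ∃ i, (c.obj i).Iso M

/-- A module is cycle-finite if it lies on a cycle and every cycle through it is finite. -/
def IsCycleFiniteModule {R : Type u} [Ring R] (M : ModA R) : Prop :=
  (∃ c : ModCycle R, c.Passes M) ∧ ∀ c : ModCycle R, c.Passes M → c.IsFiniteCycle

/-- A module is directing if it lies on no cycle. -/
def IsDirectingModule {R : Type u} [Ring R] (M : ModA R) : Prop :=
  ¬∃ c : ModCycle R, c.Passes M

section Irreducible

variable {R : Type u} [Ring R]

/-- `f` is a split monomorphism (a section). -/
def SplitMonoMap {X Y : ModA R} (f : X.M →ₗ[R] Y.M) : Prop :=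
  ∃ r : Y.M →ₗ[R] X.M, r.comp f = LinearMap.id

/-- `f` is a split epimorphism (a retraction). -/
def SplitEpiMap {X Y : ModA R} (f : X.M →ₗ[R] Y.M) : Prop :=
  ∃ s : Y.M →ₗ[R] X.M, f.comp s = LinearMap.id

/-- `f` is an irreducible homomorphism. -/
def IsIrred {X Y : ModA R} (f : X.M →ₗ[R] Y.M) : Prop :=
  ¬SplitMonoMap f ∧ ¬SplitEpiMap f ∧
    ∀ (Z : ModA R) (g : X.M →ₗ[R] Z.M) (h : Z.M →ₗ[R] Y.M), h.comp g = f →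
      SplitMonoMap g ∨ SplitEpiMap h

end Irreducible

/-- An almost split (Auslander-Reiten) sequence `0 → l → m → r → 0` in `mod R`. -/
structure AlmostSplitSeq (R : Type u) [Ring R] : Type (u + 1) where
  l : ModA R
  m : ModA R
  r : ModA R
  f : l.M →ₗ[R] m.M
  g : m.M →ₗ[R] r.M
  inj : Function.Injective f
  surj : Function.Surjective g
  exact : LinearMap.range f = LinearMap.ker g
  not_split : ¬SplitEpiMap g
  l_indec : l.IsIndec
  r_indec : r.IsIndec
  right_almost : ∀ (Z : ModA R) (h : Z.M →ₗ[R] r.M), ¬SplitEpiMap h →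
      ∃ h' : Z.M →ₗ[R] m.M, g.comp h' = h
  left_almost : ∀ (Z : ModA R) (h : l.M →ₗ[R] Z.M), ¬SplitMonoMap h →
      ∃ h' : m.M →ₗ[R] Z.M, h'.comp f = h

/-- `N ≅ τ M` for the Auslander-Reiten translation `τ = DTr`. -/
def IsTauOf {R : Type u} [Ring R] (N M : ModA R) : Prop :=
  ∃ s : AlmostSplitSeq R, s.l.Iso N ∧ s.r.Iso M

/-- The indecomposable objects of `mod R`. -/
def IndecModA (R : Type u) [Ring R] := {X : ModA R // X.IsIndec}

/-- Isomorphism is an equivalence relation on indecomposable modules. -/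
def isoSetoid (R : Type u) [Ring R] : Setoid (IndecModA R) where
  r X Y := X.1.Iso Y.1
  iseqv :=
    { refl := fun X => ⟨LinearEquiv.refl R X.1.M⟩
      symm := fun h => h.elim fun e => ⟨e.symm⟩
      trans := fun h h' => h.elim fun e => h'.elim fun e' => ⟨e.trans e'⟩ }

/-- The vertices of the Auslander-Reiten quiver `Γ_R`: isomorphism classes of
indecomposable modules in `mod R`. -/
def ARVertex (R : Type u) [Ring R] := Quotient (isoSetoid R)

/-- The vertex of `Γ_R` given by an indecomposable module. -/
def ARVertex.mk {R : Type u} [Ring R] (X : IndecModA R) : ARVertex R :=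
  Quotient.mk (isoSetoid R) X

section ARQuiver

variable {R : Type u} [Ring R]

/-- The arrows of the Auslander-Reiten quiver: `x → y` iff there is an irreducible
homomorphism between representatives. -/
def ARArrow (x y : ARVertex R) : Prop :=
  ∃ (X Y : IndecModA R) (f : X.1.M →ₗ[R] Y.1.M),
    IsIrred f ∧ ARVertex.mk X = x ∧ ARVertex.mk Y = y

/-- `TauRel x y` iff `x = τ y` in the Auslander-Reiten quiver. -/
def TauRel (x y : ARVertex R) : Prop :=
  ∃ X Y : IndecModA R, ARVertex.mk X = x ∧ ARVertex.mk Y = y ∧ IsTauOf X.1 Y.1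

/-- A vertex given by an (indecomposable) projective module. -/
def IsProjVertex (x : ARVertex R) : Prop :=
  ∃ X : IndecModA R, ARVertex.mk X = x ∧ Module.Projective R X.1.M

/-- A vertex given by an (indecomposable) injective module. -/
def IsInjVertex (x : ARVertex R) : Prop :=
  ∃ X : IndecModA R, ARVertex.mk X = x ∧ Module.Injective R X.1.M

/-- The vertex lies on an oriented cycle of `Γ_R`. -/
def OnARCycle (x : ARVertex R) : Prop := Relation.TransGen ARArrow x x

/-- An edge (arrow in either direction) of the underlying graph of `Γ_R`. -/
def ARStep (x y : ARVertex R) : Prop := ARArrow x y ∨ ARArrow y x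

/-- `D` is a connected component of the full subquiver of `Γ_R` on the vertex set `S`. -/
def IsComponentOf (S D : Set (ARVertex R)) : Prop :=
  D ⊆ S ∧ D.Nonempty ∧
    (∀ x ∈ D, ∀ y ∈ S, ARStep x y → y ∈ D) ∧
    ∀ x ∈ D, ∀ y ∈ D, Relation.ReflTransGen (fun a b => a ∈ S ∧ b ∈ S ∧ ARStep a b) x y

/-- `C` is a connected component of `Γ_R`. -/
def IsARComponent (C : Set (ARVertex R)) : Prop := IsComponentOf Set.univ C

/-- The vertex lies on an oriented cycle all of whose vertices belong to `S`. -/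
def OnCycleIn (S : Set (ARVertex R)) (x : ARVertex R) : Prop :=
  Relation.TransGen (fun a b => a ∈ S ∧ b ∈ S ∧ ARArrow a b) x x

/-- `Γ` is a connected component of the cyclic quiver `_cΓ_R` (a cyclic component). -/
def IsCyclicComponent (Γ : Set (ARVertex R)) : Prop :=
  IsComponentOf {x | OnARCycle x} Γ

/-- A vertex represented by a cycle-finite module. -/
def IsCycleFiniteVertex (x : ARVertex R) : Prop :=
  ∃ X : IndecModA R, ARVertex.mk X = x ∧ IsCycleFiniteModule X.1

/-- A vertex represented by a directing module. -/
def IsDirectingVertex (x : ARVertex R) : Prop :=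
  ∃ X : IndecModA R, ARVertex.mk X = x ∧ IsDirectingModule X.1

/-- A cycle-finite cyclic component: a cyclic component containing a cycle-finite module. -/
def IsCycleFiniteCyclicComponent (Γ : Set (ARVertex R)) : Prop :=
  IsCyclicComponent Γ ∧ ∃ x ∈ Γ, IsCycleFiniteVertex x

/-- A full translation subquiver is cyclic if each of its vertices lies on an oriented
cycle inside it. -/
def IsCyclicSub (S : Set (ARVertex R)) : Prop := ∀ x ∈ S, OnCycleIn S x

/-- A full translation subquiver is coherent: every projective vertex is the start of an
infinite sectional path inside it, and every injective vertex is the end of an infinite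
sectional path inside it. -/
def IsCoherentSub (S : Set (ARVertex R)) : Prop :=
  (∀ x ∈ S, IsProjVertex x → ∃ c : ℕ → ARVertex R, c 0 = x ∧ (∀ n, c n ∈ S) ∧
      (∀ n, ARArrow (c n) (c (n + 1))) ∧ ∀ n, ¬TauRel (c n) (c (n + 2))) ∧
  (∀ x ∈ S, IsInjVertex x → ∃ c : ℕ → ARVertex R, c 0 = x ∧ (∀ n, c n ∈ S) ∧
      (∀ n, ARArrow (c (n + 1)) (c n)) ∧ ∀ n, ¬TauRel (c (n + 2)) (c n))

/-- `S` is a convex subquiver of (the full subquiver on) `C`: every path in `C` with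
source and target in `S` has all its vertices in `S`. -/
def ConvexIn (C S : Set (ARVertex R)) : Prop :=
  ∀ (n : ℕ) (c : ℕ → ARVertex R), (∀ k ≤ n, c k ∈ C) →
    (∀ k < n, ARArrow (c k) (c (k + 1))) → c 0 ∈ S → c n ∈ S → ∀ k ≤ n, c k ∈ S

/-- `S` is the core of the almost acyclic component `C`: the finite convex subquiver of
`C` containing all vertices lying on oriented cycles in `C`. -/
def IsCoreOf (C S : Set (ARVertex R)) : Prop :=
  S ⊆ C ∧ S.Finite ∧ ConvexIn C S ∧ ∀ x ∈ C, OnCycleIn C x → x ∈ S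

/-- A component is almost acyclic if all but finitely many of its vertices do not lie on
oriented cycles. -/
def IsAlmostAcyclicComp (C : Set (ARVertex R)) : Prop := {x ∈ C | OnCycleIn C x}.Finite

/-- A component is almost cyclic if its cyclic part is cofinite. -/
def IsAlmostCyclicComp (C : Set (ARVertex R)) : Prop := {x ∈ C | ¬OnCycleIn C x}.Finite

/-- Two vertices lie in the same `τ`-orbit. -/
def TauConn (x y : ARVertex R) : Prop :=
  Relation.ReflTransGen (fun a b => TauRel a b ∨ TauRel b a) x y

/-- The left stable part of `C`: remove the `τ`-orbits of projective vertices. -/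
def leftStable (C : Set (ARVertex R)) : Set (ARVertex R) :=
  {x | x ∈ C ∧ ¬∃ y, TauConn x y ∧ IsProjVertex y}

/-- The right stable part of `C`: remove the `τ`-orbits of injective vertices. -/
def rightStable (C : Set (ARVertex R)) : Set (ARVertex R) :=
  {x | x ∈ C ∧ ¬∃ y, TauConn x y ∧ IsInjVertex y}

/-- The stable part of `C`. -/
def stablePart (C : Set (ARVertex R)) : Set (ARVertex R) := leftStable C ∩ rightStable C

end ARQuiver

/-- The arrows of the translation quiver `ℤA∞/(τ^r)`, with vertices indexed by the
`τ`-orbit coordinate in `ZMod r` and the quasi-length (minus one) in `ℕ`. -/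
def TubeArrow {r : ℕ} : ZMod r × ℕ → ZMod r × ℕ → Prop := fun u v =>
  (v.1 = u.1 ∧ v.2 = u.2 + 1) ∨ (v.1 = u.1 + 1 ∧ u.2 = v.2 + 1)

section Tube

variable {R : Type u} [Ring R]

/-- `T` is a stable tube of rank `r`, parametrized by `φ : ℤA∞/(τ^r) → Γ_R`. -/
def IsStableTubeVia (T : Set (ARVertex R)) (r : ℕ) (φ : ZMod r × ℕ → ARVertex R) : Prop :=
  0 < r ∧ Function.Injective φ ∧ Set.range φ = T ∧
    (∀ u v, TubeArrow u v → ARArrow (φ u) (φ v)) ∧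
    (∀ u v, ARArrow (φ u) (φ v) → TubeArrow u v) ∧
    ∀ (i : ZMod r) (n : ℕ), TauRel (φ (i - 1, n)) (φ (i, n))

/-- `T` is a stable tube. -/
def IsStableTube (T : Set (ARVertex R)) : Prop := ∃ r φ, IsStableTubeVia T r φ

end Tube

section Separating

variable {R : Type u} [Ring R]

/-- A family of vertices is generalized standard if `rad^∞` vanishes between its modules. -/
def GeneralizedStandardSet (U : Set (ARVertex R)) : Prop :=
  ∀ X Y : IndecModA R, ARVertex.mk X ∈ U → ARVertex.mk Y ∈ U →
    ∀ f : X.1.M →ₗ[R] Y.1.M, InRadInf f → f = 0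

/-- `S` is (isomorphic to) a composition factor (a subquotient) of `M`. -/
def IsCompFactorMod (R : Type u) [Ring R] (S : Type u) [AddCommGroup S] [Module R S]
    (M : Type u) [AddCommGroup M] [Module R M] : Prop :=
  ∃ N' N : Submodule R M, N' ≤ N ∧
    Nonempty ((↥N ⧸ N'.comap N.subtype) ≃ₗ[R] S)

/-- A family of vertices is sincere if every simple module is a composition factor of one
of its modules. -/
def SincereSet (U : Set (ARVertex R)) : Prop :=
  ∀ (S : Type u) [AddCommGroup S] [Module R S], IsSimpleModule R S →
    ∃ x ∈ U, ∃ X : IndecModA R, ARVertex.mk X = x ∧ IsCompFactorMod R S X.1.M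

/-- All homomorphisms from modules with vertex in `U` to modules with vertex in `V` vanish. -/
def HomVanish (U V : Set (ARVertex R)) : Prop :=
  ∀ X Y : IndecModA R, ARVertex.mk X ∈ U → ARVertex.mk Y ∈ V →
    ∀ f : X.1.M →ₗ[R] Y.1.M, f = 0

/-- Every homomorphism from a module in `U` to a module in `V` factors through the
additive closure of the modules in `W`. -/
def FactorsThrough (U W V : Set (ARVertex R)) : Prop :=
  ∀ X Y : IndecModA R, ARVertex.mk X ∈ U → ARVertex.mk Y ∈ V →
    ∀ f : X.1.M →ₗ[R] Y.1.M, ∃ (k : ℕ) (Z : Fin k → IndecModA R)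
      (g : ∀ i, X.1.M →ₗ[R] (Z i).1.M) (h : ∀ i, (Z i).1.M →ₗ[R] Y.1.M),
      (∀ i, ARVertex.mk (Z i) ∈ W) ∧ f = ∑ i, (h i).comp (g i)

/-- `cs` is a separating family of components of `Γ_R`. -/
def IsSeparatingFamily (cs : Set (Set (ARVertex R))) : Prop :=
  ∃ ps qs : Set (Set (ARVertex R)),
    (∀ C ∈ ps, IsARComponent C) ∧ (∀ C ∈ cs, IsARComponent C) ∧ (∀ C ∈ qs, IsARComponent C) ∧
    (∀ C, IsARComponent C → C ∈ ps ∨ C ∈ cs ∨ C ∈ qs) ∧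
    (∀ C ∈ ps, C ∉ cs ∧ C ∉ qs) ∧ (∀ C ∈ cs, C ∉ qs) ∧
    SincereSet (⋃₀ cs) ∧ GeneralizedStandardSet (⋃₀ cs) ∧
    HomVanish (⋃₀ qs) (⋃₀ ps) ∧ HomVanish (⋃₀ qs) (⋃₀ cs) ∧ HomVanish (⋃₀ cs) (⋃₀ ps) ∧
    FactorsThrough (⋃₀ ps) (⋃₀ cs) (⋃₀ qs)

end Separating

/-! ### Classes of algebras via their Auslander-Reiten quivers.
For a ring `B`, the category `mod B` of finitely generated right `B`-modules is
realized as the category of finite length left `Bᵐᵒᵖ`-modules. -/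

/-- An algebra is of finite representation type if it has only finitely many isomorphism
classes of indecomposable finitely generated (right) modules. -/
def IsFiniteRepTypeAlg (B : Type u) [Ring B] : Prop :=
  (Set.univ : Set (ARVertex Bᵐᵒᵖ)).Finite

/-- An algebra is cycle-finite if all cycles in `ind B` are finite. -/
def IsCycleFiniteAlg (B : Type u) [Ring B] : Prop :=
  ∀ c : ModCycle Bᵐᵒᵖ, c.IsFiniteCycle

/-- A generalized multicoil algebra: an algebra whose Auslander-Reiten quiver admits a
separating family of almost cyclic coherent components. -/
def IsGeneralizedMulticoilAlgebra (B : Type u) [Ring B] : Prop :=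
  ∃ cs : Set (Set (ARVertex Bᵐᵒᵖ)),
    (∀ C ∈ cs, IsARComponent C ∧ IsAlmostCyclicComp C ∧ IsCoherentSub C) ∧
    IsSeparatingFamily cs

/-- A generalized double tilted algebra: an algebra whose Auslander-Reiten quiver admits
a separating almost acyclic component (a connecting component). -/
def IsGeneralizedDoubleTiltedAlgebra (B : Type u) [Ring B] : Prop :=
  ∃ C : Set (ARVertex Bᵐᵒᵖ),
    IsARComponent C ∧ IsAlmostAcyclicComp C ∧ IsSeparatingFamily {C}

/-- A concealed canonical algebra: an algebra whose Auslander-Reiten quiver admits a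
separating family of stable tubes. -/
def IsConcealedCanonicalAlgebra (B : Type u) [Ring B] : Prop :=
  ∃ ts : Set (Set (ARVertex Bᵐᵒᵖ)), (∀ T ∈ ts, IsStableTube T) ∧ IsSeparatingFamily ts

/-- A generic module: an indecomposable module of infinite length with finite endolength. -/
def IsGenericModule (R : Type u) [Ring R] (N : RawMod R) : Prop :=
  IsIndecMod R N.M ∧ ¬IsFiniteLength R N.M ∧ IsFiniteLength (Module.End R N.M) N.M

/-- The endolength of a module: its length over its endomorphism ring. -/
noncomputable def endolength (R : Type u) [Ring R] (N : RawMod R) : WithBot ℕ∞ :=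
  Order.krullDim (Submodule (Module.End R N.M) N.M)

/-- Generic tameness in the sense of Crawley-Boevey: for each `d` there are only finitely
many isomorphism classes of generic (right) modules of endolength `d`. -/
def IsGenericallyTameAlg (B : Type u) [Ring B] : Prop :=
  ∀ d : ℕ, ∃ (k : ℕ) (T : Fin k → RawMod Bᵐᵒᵖ),
    ∀ N : RawMod Bᵐᵒᵖ, IsGenericModule Bᵐᵒᵖ N → endolength Bᵐᵒᵖ N = (d : ℕ∞) →
      ∃ i, Nonempty (N.M ≃ₗ[Bᵐᵒᵖ] (T i).M)

/-- A tame generalized multicoil algebra. -/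
def IsTameGeneralizedMulticoilAlgebra (B : Type u) [Ring B] : Prop :=
  IsGeneralizedMulticoilAlgebra B ∧ IsGenericallyTameAlg B

/-- A tame generalized double tilted algebra. -/
def IsTameGeneralizedDoubleTiltedAlgebra (B : Type u) [Ring B] : Prop :=
  IsGeneralizedDoubleTiltedAlgebra B ∧ IsGenericallyTameAlg B

/-! ### The quiver of an algebra, convex idempotents, basic and connected algebras -/

section AlgebraSide

variable (A : Type u) [Ring A]

/-- The Jacobson radical of `A` (as a left ideal; it is in fact two-sided). -/
def jacobsonRad : Ideal A := (⊥ : Ideal A).jacobson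

/-- The square of the Jacobson radical of `A`. -/
def jacobsonRadSq : Ideal A :=
  Ideal.span {x | ∃ a ∈ jacobsonRad A, ∃ b ∈ jacobsonRad A, x = a * b}

/-- A primitive idempotent of `A`. -/
def IsPrimitiveIdempotent (e : A) : Prop :=
  IsIdempotentElem e ∧ e ≠ 0 ∧
    ∀ f g : A, IsIdempotentElem f → IsIdempotentElem g → f * g = 0 → g * f = 0 →
      e = f + g → f = 0 ∨ g = 0

/-- A complete family of pairwise orthogonal primitive idempotents of `A`; its indices
are the vertices of the quiver `Q_A` of `A`. -/
structure CompleteIdemFamily (A : Type u) [Ring A] where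
  n : ℕ
  e : Fin n → A
  prim : ∀ i, IsPrimitiveIdempotent A (e i)
  orth : ∀ i j, i ≠ j → e i * e j = 0
  total : ∑ i, e i = 1

/-- There is an arrow `i → j` in the quiver `Q_A` iff `e_i (rad A) e_j ⊄ (rad A)²`. -/
def QAarrow (E : CompleteIdemFamily A) (i j : Fin E.n) : Prop :=
  ∃ y ∈ jacobsonRad A, E.e i * y * E.e j ∉ jacobsonRadSq A

/-- A set of vertices of `Q_A` is convex if every path of `Q_A` with source and target in
it has all its vertices in it. -/
def ConvexVertexSet (E : CompleteIdemFamily A) (S : Set (Fin E.n)) : Prop :=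
  ∀ (n : ℕ) (c : ℕ → Fin E.n), (∀ k < n, QAarrow A E (c k) (c (k + 1))) →
    c 0 ∈ S → c n ∈ S → ∀ k ≤ n, c k ∈ S

/-- A convex idempotent of `A`: a sum of pairwise orthogonal primitive idempotents
corresponding to the vertices of a convex subquiver of `Q_A`. -/
def IsConvexIdempotent (e : A) : Prop :=
  ∃ (E : CompleteIdemFamily A) (S : Finset (Fin E.n)),
    ConvexVertexSet A E ↑S ∧ e = ∑ i ∈ S, E.e i

/-- The corner `eAe` of `A` at an idempotent `e`, as a nonunital subring (it is a unital
ring with unit `e`). -/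
def cornerRing (e : A) : NonUnitalSubring A where
  carrier := {x | e * x = x ∧ x * e = x}
  zero_mem' := by simp
  add_mem' := by
    rintro a b ⟨ha1, ha2⟩ ⟨hb1, hb2⟩
    constructor
    · rw [mul_add, ha1, hb1]
    · rw [add_mul, ha2, hb2]
  neg_mem' := by
    rintro a ⟨ha1, ha2⟩
    constructor
    · rw [mul_neg, ha1]
    · rw [neg_mul, ha2]
  mul_mem' := by
    rintro a b ⟨ha1, ha2⟩ ⟨hb1, hb2⟩
    constructor
    · rw [← mul_assoc, ha1]
    · rw [mul_assoc, hb2]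

/-- An (indecomposable =) connected algebra: no nontrivial central idempotents. -/
def IsConnectedAlgebra : Prop :=
  Nontrivial A ∧ ∀ e : A, IsIdempotentElem e → e ∈ Set.center A → e = 0 ∨ e = 1

/-- A basic algebra: distinct orthogonal primitive idempotents have nonisomorphic
associated indecomposable projective right modules. -/
def IsBasicAlgebra : Prop :=
  ¬∃ e f : A, IsPrimitiveIdempotent A e ∧ IsPrimitiveIdempotent A f ∧
    e * f = 0 ∧ f * e = 0 ∧
    Nonempty ((Submodule.span Aᵐᵒᵖ {e} : Submodule Aᵐᵒᵖ A) ≃ₗ[Aᵐᵒᵖ]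
      (Submodule.span Aᵐᵒᵖ {f} : Submodule Aᵐᵒᵖ A))

end AlgebraSide

/-! ### Support algebras and faithful algebras of families of vertices -/

section Support

variable (A : Type u) [Ring A]

/-- The radical of a module: the intersection of its maximal submodules. -/
def modRadical (R : Type u) [Ring R] (M : Type u) [AddCommGroup M] [Module R M] :
    Submodule R M :=
  sInf {N | IsCoatom N}

/-- The intersection `ann_A(Γ)` of the annihilators of all right `A`-modules whose
vertices belong to `Γ`, as a two-sided ideal of `A`. -/
def annTwoSidedIdeal (Γ : Set (ARVertex Aᵐᵒᵖ)) : TwoSidedIdeal A :=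
  TwoSidedIdeal.mk'
    {a | ∀ x ∈ Γ, ∀ X : IndecModA Aᵐᵒᵖ, ARVertex.mk X = x →
      ∀ m : X.1.M, MulOpposite.op a • m = 0}
    (by intro x _ X _ m; simp)
    (by
      intro a b ha hb x hx X hX m
      have : MulOpposite.op (a + b) • m = MulOpposite.op a • m + MulOpposite.op b • m := by
        rw [← add_smul]; rfl
      rw [this, ha x hx X hX m, hb x hx X hX m, add_zero])
    (by
      intro a ha x hx X hX m
      have : MulOpposite.op (-a) • m = -(MulOpposite.op a • m) := by
        rw [← neg_smul]; rfl
      rw [this, ha x hx X hX m, neg_zero])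
    (by
      intro a b hb x hx X hX m
      have : MulOpposite.op (a * b) • m = MulOpposite.op b • (MulOpposite.op a • m) := by
        rw [← mul_smul]; rfl
      rw [this, hb x hx X hX _])
    (by
      intro a b ha x hx X hX m
      have : MulOpposite.op (a * b) • m = MulOpposite.op b • (MulOpposite.op a • m) := by
        rw [← mul_smul]; rfl
      rw [this, ha x hx X hX m, smul_zero])

/-- The faithful algebra `B(Γ) = A / ann_A(Γ)` of a family `Γ` of vertices of `Γ_A`. -/
abbrev faithfulAlg (Γ : Set (ARVertex Aᵐᵒᵖ)) : Type u :=
  (annTwoSidedIdeal A Γ).ringCon.Quotient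

/-- The canonical projection `A → B(Γ)`. -/
def faithfulProj (Γ : Set (ARVertex Aᵐᵒᵖ)) : A →+* faithfulAlg A Γ :=
  RingCon.mk' (annTwoSidedIdeal A Γ).ringCon

/-- The trace ideal `t_A(Γ)`: the two-sided ideal of `A` generated by the images of all
homomorphisms of right `A`-modules from `Q` to `A`. -/
def traceIdeal (Q : Submodule Aᵐᵒᵖ A) : TwoSidedIdeal A :=
  TwoSidedIdeal.span (⋃ f : ↥Q →ₗ[Aᵐᵒᵖ] A, Set.range f)

/-- A decomposition `A = P_Γ ⊕ Q_Γ` of `A` in `mod A` such that the simple summands of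
`P_Γ / rad P_Γ` are exactly the simple composition factors of the modules in `Γ`. -/
structure GammaDecomp (A : Type u) [Ring A] (Γ : Set (ARVertex Aᵐᵒᵖ)) where
  P : Submodule Aᵐᵒᵖ A
  Q : Submodule Aᵐᵒᵖ A
  compl : IsCompl P Q
  top_factors : ∀ (S : Type u) [AddCommGroup S] [Module Aᵐᵒᵖ S], IsSimpleModule Aᵐᵒᵖ S →
    (IsCompFactorMod Aᵐᵒᵖ S (↥P ⧸ modRadical Aᵐᵒᵖ ↥P) ↔
      ∃ x ∈ Γ, ∃ X : IndecModA Aᵐᵒᵖ, ARVertex.mk X = x ∧ IsCompFactorMod Aᵐᵒᵖ S X.1.M)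

end Support

/-- Restriction of scalars along a surjective ring homomorphism `π : A → B` identifies a
vertex `y` of `Γ_B` with a vertex `x` of `Γ_A`: representatives have the same underlying
group, with the `A`-action obtained from the `B`-action through `π`. -/
def VertexRestrictsTo {A B : Type u} [Ring A] [Ring B] (π : A →+* B)
    (y : ARVertex Bᵐᵒᵖ) (x : ARVertex Aᵐᵒᵖ) : Prop :=
  ∃ (N : IndecModA Bᵐᵒᵖ) (X : IndecModA Aᵐᵒᵖ), ARVertex.mk N = y ∧ ARVertex.mk X = x ∧
    ∃ e : X.1.M ≃+ N.1.M, ∀ (a : A) (m : X.1.M),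
      e (MulOpposite.op a • m) = MulOpposite.op (π a) • e m

/-! ### `K`-module structures on Hom-groups, lengths, and Ext -/

section KLength

variable (K B : Type u) [CommRing K] [Ring B] [Algebra K B]
variable (X N : Type u) [AddCommGroup X] [Module B X] [AddCommGroup N] [Module B N]

/-- The action of `K` on `B`-linear maps, through `algebraMap K B`. -/
def homKSMul (k : K) (f : X →ₗ[B] N) : X →ₗ[B] N where
  toFun x := algebraMap K B k • f x
  map_add' x y := by show algebraMap K B k • f (x + y) = _; rw [map_add, smul_add]
  map_smul' b x := by
    simp only [map_smul, RingHom.id_apply, smul_smul]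
    rw [Algebra.commutes]

/-- The `K`-module structure on the group of `B`-linear maps. -/
def homKModule : Module K (X →ₗ[B] N) where
  smul := homKSMul K B X N
  one_smul f := LinearMap.ext fun x => by
    show algebraMap K B 1 • f x = f x
    rw [map_one, one_smul]
  mul_smul k l f := LinearMap.ext fun x => by
    show algebraMap K B (k * l) • f x = algebraMap K B k • algebraMap K B l • f x
    rw [map_mul, mul_smul]
  smul_zero k := LinearMap.ext fun x => by
    show algebraMap K B k • (0 : X →ₗ[B] N) x = 0
    simp
  smul_add k f g := LinearMap.ext fun x => by
    show algebraMap K B k • (f + g) x = algebraMap K B k • f x + algebraMap K B k • g x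
    simp [smul_add]
  add_smul k l f := LinearMap.ext fun x => by
    show algebraMap K B (k + l) • f x = algebraMap K B k • f x + algebraMap K B l • f x
    rw [map_add, add_smul]
  zero_smul f := LinearMap.ext fun x => by
    show algebraMap K B 0 • f x = 0
    rw [map_zero, zero_smul]

/-- The length `|Hom_B(X, N)|` of the group of `B`-linear maps `X → N` as a `K`-module. -/
noncomputable def homKLength : WithBot ℕ∞ :=
  letI : Module K (X →ₗ[B] N) := homKModule K B X N
  Order.krullDim (Submodule K (X →ₗ[B] N))

/-- The canonical surjection from the free module on (the underlying set of) `X` to `X`. -/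
noncomputable def freeCover : (X →₀ B) →ₗ[B] X :=
  Finsupp.linearCombination B id

/-- The length `|Ext¹_B(X, N)|` of `Ext¹` as a `K`-module, computed as the cokernel of
`Hom_B(F, N) → Hom_B(Ω X, N)` for the canonical free cover `F → X` with kernel `Ω X`. -/
noncomputable def ext1KLength : WithBot ℕ∞ :=
  letI : Module K (↥(LinearMap.ker (freeCover B X)) →ₗ[B] N) :=
    homKModule K B (↥(LinearMap.ker (freeCover B X))) N
  let D : Submodule K (↥(LinearMap.ker (freeCover B X)) →ₗ[B] N) :=
    { carrier := {f | ∃ g : (X →₀ B) →ₗ[B] N,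
        f = g.comp (LinearMap.ker (freeCover B X)).subtype}
      add_mem' := by
        rintro f₁ f₂ ⟨g₁, rfl⟩ ⟨g₂, rfl⟩
        exact ⟨g₁ + g₂, rfl⟩
      zero_mem' := ⟨0, rfl⟩
      smul_mem' := by
        rintro k f ⟨g, rfl⟩
        exact ⟨homKSMul K B _ N k g, rfl⟩ }
  Order.krullDim (Submodule K ((↥(LinearMap.ker (freeCover B X)) →ₗ[B] N) ⧸ D))

end KLength

/-- Vanishing of `Ext¹_B(X, N)`: every short exact sequence `0 → N → E → X → 0` splits. -/
def Ext1IsZero (B : Type u) [Ring B] (X : Type u) [AddCommGroup X] [Module B X]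
    (N : Type u) [AddCommGroup N] [Module B N] : Prop :=
  ∀ (E : Type u) [AddCommGroup E] [Module B E], ∀ (f : N →ₗ[B] E) (g : E →ₗ[B] X),
    Function.Injective f → Function.Surjective g → LinearMap.range f = LinearMap.ker g →
    ∃ s : X →ₗ[B] E, g.comp s = LinearMap.id

/-- The syzygy `Ω X`: the kernel of the canonical free cover of `X`. -/
noncomputable def syzygyRaw (B : Type u) [Ring B] (X : RawMod B) : RawMod B :=
  ⟨↥(LinearMap.ker (freeCover B X.M))⟩

/-- Iterated syzygies. -/
noncomputable def syzygyIter (B : Type u) [Ring B] : ℕ → RawMod B → RawMod B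
  | 0, X => X
  | n + 1, X => syzygyRaw B (syzygyIter B n X)

/-- Vanishing of `Ext^r_B(X, N)` for `r ≥ 1`, via `Ext^r(X, N) ≅ Ext¹(Ω^{r-1} X, N)`. -/
noncomputable def ExtIsZero (B : Type u) [Ring B] (X N : RawMod B) (r : ℕ) : Prop :=
  Ext1IsZero B (syzygyIter B (r - 1) X).M N.M

/-- `[X] = [M]` in the Grothendieck group `K₀`: the modules `X` and `M` have the same
composition factors including multiplicities. -/
def SameCompFactors {B : Type u} [Ring B] (X M : ModA B) : Prop :=
  ∃ (n : ℕ) (s : Fin (n + 1) → Submodule B X.M) (t : Fin (n + 1) → Submodule B M.M)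
    (σ : Equiv.Perm (Fin n)),
    s 0 = ⊥ ∧ s (Fin.last n) = ⊤ ∧ t 0 = ⊥ ∧ t (Fin.last n) = ⊤ ∧
    (∀ i : Fin n, s i.castSucc ≤ s i.succ) ∧ (∀ i : Fin n, t i.castSucc ≤ t i.succ) ∧
    ∀ i : Fin n,
      IsSimpleModule B (↥(s i.succ) ⧸ (s i.castSucc).comap (s i.succ).subtype) ∧
      Nonempty ((↥(s i.succ) ⧸ (s i.castSucc).comap (s i.succ).subtype) ≃ₗ[B]
        (↥(t (σ i).succ) ⧸ (t (σ i).castSucc).comap (t (σ i).succ).subtype))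

/-- A torsion class in `mod B`: a class of modules closed under factor modules and
extensions. -/
def IsTorsionClass (B : Type u) [Ring B] (T : Set (ModA B)) : Prop :=
  (∀ M ∈ T, ∀ (N : ModA B) (g : M.M →ₗ[B] N.M), Function.Surjective g → N ∈ T) ∧
  ∀ (X E M : ModA B) (f : X.M →ₗ[B] E.M) (g : E.M →ₗ[B] M.M),
    Function.Injective f → Function.Surjective g → LinearMap.range f = LinearMap.ker g →
    X ∈ T → M ∈ T → E ∈ T

/-- A torsion class is functorially finite iff it is of the form `Fac(M)`. -/
def IsFunctoriallyFinite (B : Type u) [Ring B] (T : Set (ModA B)) : Prop :=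
  ∃ M : ModA B,
    T = {N | ∃ (k : ℕ) (g : (Fin k → M.M) →ₗ[B] N.M), Function.Surjective g}

/-- A module `M` is `τ`-rigid if `Hom(M, τM) = 0`. -/
def IsTauRigid {B : Type u} [Ring B] (M : ModA B) : Prop :=
  ∀ N : ModA B, IsTauOf N M → ∀ f : M.M →ₗ[B] N.M, f = 0

/-- A module `M` is rigid if `Ext¹(M, M) = 0`. -/
def IsRigid {B : Type u} [Ring B] (M : ModA B) : Prop := Ext1IsZero B M.M M.M

/-- `α(M) ≤ 2`: the middle term of any almost split sequence ending at `M` has at most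
two indecomposable direct summands. -/
def AlphaLe2 {B : Type u} [Ring B] (M : ModA B) : Prop :=
  ∀ s : AlmostSplitSeq B, s.r.Iso M →
    ∀ (k : ℕ) (N : Fin k → Submodule B s.m.M),
      (∀ i, IsIndecMod B ↥(N i)) → iSupIndep N → (⨆ i, N i) = ⊤ → k ≤ 2


section Basics

variable {R : Type u} [Ring R]

instance modA_noeth (X : ModA R) : IsNoetherian R X.M :=
  (isFiniteLength_iff_isNoetherian_isArtinian.mp X.finLen).1

instance modA_artin (X : ModA R) : IsArtinian R X.M :=
  (isFiniteLength_iff_isNoetherian_isArtinian.mp X.finLen).2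

/-- Bundle a noetherian and artinian module. -/
def ModA.of (R : Type u) [Ring R] (M : Type u) [AddCommGroup M] [Module R M]
    [IsNoetherian R M] [IsArtinian R M] : ModA R :=
  { M := M, finLen := isFiniteLength_iff_isNoetherian_isArtinian.mpr ⟨inferInstance, inferInstance⟩ }

/-- Factor a map through a surjection. -/
theorem factor_surj {A B C : Type u} [AddCommGroup A] [Module R A] [AddCommGroup B] [Module R B]
    [AddCommGroup C] [Module R C] (s : A →ₗ[R] B) (t : A →ₗ[R] C)
    (hs : Function.Surjective s) (h : ∀ a, s a = 0 → t a = 0) :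
    ∃ k : B →ₗ[R] C, ∀ a, k (s a) = t a := by
  let e := s.quotKerEquivOfSurjective hs
  refine ⟨((LinearMap.ker s).liftQ t (fun a ha => h a ha)).comp e.symm.toLinearMap, fun a => ?_⟩
  have : e.symm (s a) = Submodule.Quotient.mk a := by
    rw [LinearEquiv.symm_apply_eq]; rfl
  rw [LinearMap.comp_apply]
  erw [this]
  exact Submodule.liftQ_apply _ _ _

/-- Factor a map through an injection. -/
theorem factor_inj {A B C : Type u} [AddCommGroup A] [Module R A] [AddCommGroup B] [Module R B]
    [AddCommGroup C] [Module R C] (s : A →ₗ[R] B) (t : C →ₗ[R] B)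
    (hs : Function.Injective s) (h : ∀ c, ∃ a, s a = t c) :
    ∃ k : C →ₗ[R] A, ∀ c, s (k c) = t c := by
  let e := LinearEquiv.ofInjective s hs
  refine ⟨e.symm.toLinearMap.comp (t.codRestrict (LinearMap.range s) h), fun c => ?_⟩
  have := congrArg Subtype.val
    (e.apply_symm_apply (t.codRestrict (LinearMap.range s) h c))
  exact this

theorem indec_compl {M : Type u} [AddCommGroup M] [Module R M] (hM : IsIndecMod R M)
    {S T : Submodule R M} (h : IsCompl S T) : S = ⊥ ∨ T = ⊥ := by
  let p := S.projection T h
  have hp : p * p = p := by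
    ext x
    simp [p]
  rcases hM.2 p hp with h0 | h1
  · left
    rw [eq_bot_iff]
    intro x hx
    have : p x = x := by simpa [p] using hx
    rw [← this, h0]; simp
  · right
    rw [eq_bot_iff]
    intro x hx
    have : p x = 0 := by simpa [p] using hx
    rw [h1] at this
    simpa using this

/-- A split mono from a nonzero module into an indecomposable one is bijective. -/
theorem indec_splitmono {A B : Type u} [AddCommGroup A] [Module R A] [AddCommGroup B] [Module R B]
    [Nontrivial A] (hB : IsIndecMod R B) (s : A →ₗ[R] B) (r : B →ₗ[R] A)
    (h : ∀ a, r (s a) = a) : Function.Bijective s := by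
  have hp : (s.comp r : Module.End R B) * (s.comp r) = s.comp r := by
    ext x; simp [h]
  refine ⟨Function.LeftInverse.injective h, ?_⟩
  rcases hB.2 _ hp with h0 | h1
  · exfalso
    obtain ⟨a, ha⟩ := exists_ne (0 : A)
    apply ha
    have := LinearMap.congr_fun h0 (s a)
    simp [h] at this
    rw [← h a, this, map_zero]
  · intro b
    exact ⟨r b, LinearMap.congr_fun h1 b⟩

theorem indec_splitepi {A B : Type u} [AddCommGroup A] [Module R A] [AddCommGroup B] [Module R B]
    [Nontrivial A] (hB : IsIndecMod R B) (s : A →ₗ[R] B) (r : B →ₗ[R] A)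
    (h : ∀ a, r (s a) = a) : Function.Bijective r := by
  have hs := indec_splitmono hB s r h
  refine ⟨?_, fun a => ⟨s a, h a⟩⟩
  intro x y hxy
  obtain ⟨a, rfl⟩ := hs.2 x
  obtain ⟨b, rfl⟩ := hs.2 y
  rw [h, h] at hxy
  rw [hxy]

theorem indec_nilp {X : ModA R} (hX : X.IsIndec) (θ : Module.End R X.M)
    (h : ¬ Function.Bijective θ) : ∃ n : ℕ, θ ^ n = 0 := by
  obtain ⟨n, hn⟩ := (θ.eventually_isCompl_ker_pow_range_pow.and
    (Filter.eventually_ge_atTop 1)).exists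
  rcases indec_compl hX hn.1 with h1 | h1
  · exfalso
    apply h
    have hinj : Function.Injective θ := by
      rw [← LinearMap.ker_eq_bot, eq_bot_iff, ← h1]
      intro x hx
      obtain ⟨k, rfl⟩ : ∃ k, n = k + 1 := ⟨n - 1, by omega⟩
      rw [LinearMap.mem_ker] at hx ⊢
      rw [pow_succ, Module.End.mul_apply, hx, map_zero]
    exact ⟨hinj, IsArtinian.surjective_of_injective_endomorphism θ hinj⟩
  · exact ⟨n, LinearMap.range_eq_bot.mp h1⟩

/-- Induction over direct sum decompositions. -/
theorem decomp_induct (C : ModA R → Prop)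
    (h0 : ∀ W : ModA R, Subsingleton W.M → C W)
    (h1 : ∀ W : ModA R, W.IsIndec → C W)
    (h2 : ∀ W V N : ModA R, C V → C N → Nonempty (W.M ≃ₗ[R] V.M × N.M) → C W) :
    ∀ W, C W := by
  have key : ∀ n : ℕ∞, ∀ W : ModA R, Module.length R W.M = n → C W := by
    intro n
    induction n using WellFoundedLT.induction with
    | ind n ih =>
      intro W hW
      by_cases hs : Subsingleton W.M
      · exact h0 W hs
      by_cases hi : W.IsIndec
      · exact h1 W hi
      have hnt : Nontrivial W.M := not_subsingleton_iff_nontrivial.mp hs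
      have : ∃ e : Module.End R W.M, e * e = e ∧ e ≠ 0 ∧ e ≠ 1 := by
        by_contra hcon
        push Not at hcon
        apply hi
        refine ⟨hnt, fun e he => ?_⟩
        by_cases h : e = 0
        · exact Or.inl h
        · exact Or.inr (hcon e he h)
      obtain ⟨e, he, he0, he1⟩ := this
      have hc : IsCompl (LinearMap.range e) (LinearMap.ker e) :=
        LinearMap.IsIdempotentElem.isCompl he
      have hr : LinearMap.range e ≠ ⊤ := by
        intro h
        apply he1
        ext x
        obtain ⟨y, rfl⟩ := LinearMap.range_eq_top.mp h x
        exact LinearMap.congr_fun he y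
      have hk : LinearMap.ker e ≠ ⊤ := by
        intro h
        exact he0 (LinearMap.ker_eq_top.mp h)
      refine h2 W (ModA.of R (LinearMap.range e)) (ModA.of R (LinearMap.ker e)) ?_ ?_
        ⟨(Submodule.prodEquivOfIsCompl _ _ hc).symm⟩
      · exact ih _ (hW ▸ Submodule.length_lt hr) _ rfl
      · exact ih _ (hW ▸ Submodule.length_lt hk) _ rfl
  exact fun W => key _ W rfl

theorem irred_ne_zero {X Y : ModA R} (hX : X.IsIndec) {f : X.M →ₗ[R] Y.M} (hf : IsIrred f) :
    f ≠ 0 := by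
  rintro rfl
  have h1 := hX.1
  by_cases hY : Subsingleton Y.M
  · exact hf.2.1 ⟨0, by ext y; exact Subsingleton.elim _ _⟩
  rcases hf.2.2 (ModA.of R PUnit) 0 0 (by simp) with ⟨r, hr⟩ | ⟨s, hs⟩
  · obtain ⟨a, ha⟩ := exists_ne (0 : X.M)
    exact ha (by simpa using (LinearMap.congr_fun hr a).symm)
  · apply hY
    refine ⟨fun a b => ?_⟩
    have := fun a => LinearMap.congr_fun hs a
    simp at this
    rw [← this a, ← this b]

theorem irred_inj_or_surj {X Y : ModA R} {f : X.M →ₗ[R] Y.M} (hf : IsIrred f) :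
    Function.Injective f ∨ Function.Surjective f := by
  rcases hf.2.2 (ModA.of R (LinearMap.range f)) f.rangeRestrict (LinearMap.range f).subtype
    (by ext; rfl) with ⟨r, hr⟩ | ⟨s, hs⟩
  · left
    intro x y hxy
    have h : f.rangeRestrict x = f.rangeRestrict y := Subtype.ext hxy
    have := congrArg r h
    have e : ∀ a, r (f.rangeRestrict a) = a := fun a => LinearMap.congr_fun hr a
    exact (e x).symm.trans (this.trans (e y))
  · right
    intro y
    have := LinearMap.congr_fun hs y
    obtain ⟨x, hx⟩ := (s y).2
    exact ⟨x, hx.trans this⟩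

theorem irred_iso {X Y X' Y' : ModA R} {f : X.M →ₗ[R] Y.M} (hf : IsIrred f)
    (e : X'.M ≃ₗ[R] X.M) (e' : Y.M ≃ₗ[R] Y'.M) :
    IsIrred (X := X') (Y := Y') (e'.toLinearMap.comp (f.comp e.toLinearMap)) := by
  refine ⟨?_, ?_, ?_⟩
  · rintro ⟨r, hr⟩
    apply hf.1
    refine ⟨e.toLinearMap.comp (r.comp e'.toLinearMap), ?_⟩
    ext x
    have := LinearMap.congr_fun hr (e.symm x)
    simp at this
    simp [this]
  · rintro ⟨s, hs⟩
    apply hf.2.1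
    refine ⟨e.toLinearMap.comp (s.comp e'.toLinearMap), ?_⟩
    ext x
    have := LinearMap.congr_fun hs (e' x)
    simp at this
    simp [this]
  · intro Z g h hgh
    rcases hf.2.2 Z (g.comp e.symm.toLinearMap) (e'.symm.toLinearMap.comp h) (by
      ext x
      have := LinearMap.congr_fun hgh (e.symm x)
      simp at this
      simp [this]) with ⟨r, hr⟩ | ⟨s, hs⟩
    · left
      refine ⟨e.symm.toLinearMap.comp r, ?_⟩
      ext x
      have := LinearMap.congr_fun hr (e x)
      simp at this
      simp [this]
    · right
      refine ⟨s.comp e'.symm.toLinearMap, ?_⟩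
      ext x
      have := LinearMap.congr_fun hs (e'.symm x)
      simp at this
      simp [this]

end Basics


section Radical

variable {R : Type u} [Ring R]

theorem inRad_post {X Y Z : ModA R} {f : X.M →ₗ[R] Y.M} (hf : InRad f) (k : Y.M →ₗ[R] Z.M) :
    InRad (X := X) (Y := Z) (k.comp f) := by
  intro W hW g h hb
  exact hf W hW g (h.comp k) hb

theorem inRad_pre {X Y Z : ModA R} {f : X.M →ₗ[R] Y.M} (hf : InRad f) (k : Z.M →ₗ[R] X.M) :
    InRad (X := Z) (Y := Y) (f.comp k) := by
  intro W hW g h hb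
  exact hf W hW (k.comp g) h hb

theorem radPow_pre (n : ℕ) {X Y Z : ModA R} {f : X.M →ₗ[R] Y.M} (hf : f ∈ radPow R n X Y)
    (k : Z.M →ₗ[R] X.M) : f.comp k ∈ radPow R n Z Y := by
  cases n with
  | zero => exact AddSubgroup.mem_top _
  | succ n =>
    have hf' : f ∈ AddSubgroup.closure {f | ∃ (Z : ModA R) (g : X.M →ₗ[R] Z.M) (h : Z.M →ₗ[R] Y.M),
        InRad g ∧ h ∈ radPow R n Z Y ∧ f = h.comp g} := hf
    refine AddSubgroup.closure_induction (p := fun f _ => f.comp k ∈ radPow R (n + 1) Z Y)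
      ?_ ?_ ?_ ?_ hf'
    · rintro f ⟨W, g, h, hg, hh, rfl⟩
      exact AddSubgroup.subset_closure ⟨W, g.comp k, h, inRad_pre hg k, hh, rfl⟩
    · simp
    · intro a b _ _ ha hb
      rw [LinearMap.add_comp]
      exact AddSubgroup.add_mem _ ha hb
    · intro a _ ha
      rw [LinearMap.neg_comp]
      exact AddSubgroup.neg_mem _ ha

theorem inRadInf_pre {X Y Z : ModA R} {f : X.M →ₗ[R] Y.M} (hf : InRadInf f)
    (k : Z.M →ₗ[R] X.M) : InRadInf (X := Z) (Y := Y) (f.comp k) :=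
  fun n => radPow_pre n (hf n) k

theorem radPow_succ_mem (n : ℕ) {X Y Z : ModA R} {g : X.M →ₗ[R] Z.M} {h : Z.M →ₗ[R] Y.M}
    (hg : InRad g) (hh : h ∈ radPow R n Z Y) : h.comp g ∈ radPow R (n + 1) X Y :=
  AddSubgroup.subset_closure ⟨Z, g, h, hg, hh, rfl⟩

theorem splitMono_of_not_inRad {X Y : ModA R} (hX : X.IsIndec) {f : X.M →ₗ[R] Y.M}
    (hf : ¬ InRad f) : SplitMonoMap f := by
  unfold InRad at hf
  push Not at hf
  obtain ⟨Z, hZ, g, h, hb⟩ := hf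
  let e := LinearEquiv.ofBijective _ hb
  have := hZ.1
  have hr : ∀ z, (e.symm.toLinearMap.comp (h.comp f)) (g z) = z := fun z => e.symm_apply_apply z
  have hgb := indec_splitmono hX g _ hr
  refine ⟨g.comp (e.symm.toLinearMap.comp h), ?_⟩
  ext x
  obtain ⟨z, rfl⟩ := hgb.2 x
  exact congrArg g (hr z)

theorem splitEpi_of_not_inRad {X Y : ModA R} (hY : Y.IsIndec) {f : X.M →ₗ[R] Y.M}
    (hf : ¬ InRad f) : SplitEpiMap f := by
  unfold InRad at hf
  push Not at hf
  obtain ⟨Z, hZ, g, h, hb⟩ := hf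
  let e := LinearEquiv.ofBijective _ hb
  have := hZ.1
  have hr : ∀ z, h ((f.comp (g.comp e.symm.toLinearMap)) z) = z := fun z => e.apply_symm_apply z
  have hgb := indec_splitepi hY _ h hr
  refine ⟨g.comp (e.symm.toLinearMap.comp h), ?_⟩
  ext x
  apply hgb.1
  exact hr (h x)

/-- A map which factors through `Z` and escapes a subgroup closed under addition already escapes
through an indecomposable. -/
theorem exists_indec_factor (Z : ModA R) : ∀ {X Y : ModA R} (S : AddSubgroup (X.M →ₗ[R] Y.M))
    (g : X.M →ₗ[R] Z.M) (h : Z.M →ₗ[R] Y.M), h.comp g ∉ S →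
    ∃ (W : ModA R) (p : Z.M →ₗ[R] W.M) (i : W.M →ₗ[R] Z.M), W.IsIndec ∧
      (h.comp i).comp (p.comp g) ∉ S := by
  induction Z using decomp_induct with
  | h0 Z hZ =>
    intro X Y S g h hgh
    exfalso; apply hgh
    have : h = 0 := by
      ext z; rw [Subsingleton.elim z 0]; simp
    rw [this, LinearMap.zero_comp]; exact S.zero_mem
  | h1 Z hZ =>
    intro X Y S g h hgh
    exact ⟨Z, LinearMap.id, LinearMap.id, hZ, hgh⟩
  | h2 Z V N hV hN he =>
    intro X Y S g h hgh
    obtain ⟨e⟩ := he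
    let p1 : Z.M →ₗ[R] V.M := (LinearMap.fst R V.M N.M).comp e.toLinearMap
    let p2 : Z.M →ₗ[R] N.M := (LinearMap.snd R V.M N.M).comp e.toLinearMap
    let i1 : V.M →ₗ[R] Z.M := e.symm.toLinearMap.comp (LinearMap.inl R V.M N.M)
    let i2 : N.M →ₗ[R] Z.M := e.symm.toLinearMap.comp (LinearMap.inr R V.M N.M)
    have hsum : h.comp g = (h.comp i1).comp (p1.comp g) + (h.comp i2).comp (p2.comp g) := by
      ext x
      have : g x = i1 (p1 (g x)) + i2 (p2 (g x)) := by
        apply e.injective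
        rw [map_add]
        simp [i1, i2, p1, p2]
      change h (g x) = h (i1 (p1 (g x))) + h (i2 (p2 (g x)))
      rw [← map_add, ← this]
    by_cases h1 : (h.comp i1).comp (p1.comp g) ∈ S
    · have h2 : (h.comp i2).comp (p2.comp g) ∉ S := by
        intro h2
        apply hgh
        rw [hsum]
        exact S.add_mem h1 h2
      obtain ⟨W, p, i, hW, hpi⟩ := hN S _ _ h2
      exact ⟨W, p.comp p2, i2.comp i, hW, hpi⟩
    · obtain ⟨W, p, i, hW, hpi⟩ := hV S _ _ h1
      exact ⟨W, p.comp p1, i1.comp i, hW, hpi⟩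

theorem mk_eq_of_bij {A B : IndecModA R} (h : A.1.M →ₗ[R] B.1.M) (hb : Function.Bijective h) :
    ARVertex.mk A = ARVertex.mk B :=
  Quotient.sound (s := isoSetoid R) ⟨LinearEquiv.ofBijective h hb⟩

theorem iso_of_mk_eq {A B : IndecModA R} (h : ARVertex.mk A = ARVertex.mk B) :
    Nonempty (A.1.M ≃ₗ[R] B.1.M) :=
  Quotient.exact (s := isoSetoid R) h

theorem path_of_radPow (n : ℕ) : ∀ (A B : IndecModA R) (h : A.1.M →ₗ[R] B.1.M),
    h ∈ radPow R n A.1 B.1 → h ∉ radPow R (n + 1) A.1 B.1 →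
    Relation.ReflTransGen ARArrow (ARVertex.mk A) (ARVertex.mk B) := by
  induction n with
  | zero =>
    intro A B h _ hn
    have hr : ¬ InRad h := fun hr => hn (by
      have := radPow_succ_mem (Y := B.1) 0 (h := LinearMap.id) hr (AddSubgroup.mem_top _)
      simpa using this)
    obtain ⟨r, hr⟩ := splitMono_of_not_inRad A.2 hr
    have := A.2.1
    rw [mk_eq_of_bij h (indec_splitmono B.2 h r (LinearMap.congr_fun hr))]
  | succ n ih =>
    intro A B h hm hn
    have : ∃ (Z : ModA R) (g : A.1.M →ₗ[R] Z.M) (k : Z.M →ₗ[R] B.1.M),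
        InRad g ∧ k ∈ radPow R n Z B.1 ∧ k.comp g ∉ radPow R (n + 2) A.1 B.1 := by
      by_contra hcon
      push Not at hcon
      apply hn
      have hle : radPow R (n + 1) A.1 B.1 ≤ radPow R (n + 2) A.1 B.1 := by
        refine (AddSubgroup.closure_le _).mpr ?_
        rintro f ⟨Z, g, k, hg, hk, rfl⟩
        exact hcon Z g k hg hk
      exact hle hm
    obtain ⟨Z, g, k, hg, hk, hkg⟩ := this
    obtain ⟨W, p, i, hW, hpi⟩ := exists_indec_factor Z _ g k hkg
    have hg' : InRad (X := A.1) (Y := W) (p.comp g) := inRad_post hg p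
    have hk' : k.comp i ∈ radPow R n W B.1 := radPow_pre n hk i
    have hk'' : k.comp i ∉ radPow R (n + 1) W B.1 := fun hc => hpi (radPow_succ_mem _ hg' hc)
    refine Relation.ReflTransGen.head ?_ (ih ⟨W, hW⟩ B (k.comp i) hk' hk'')
    refine ⟨A, ⟨W, hW⟩, p.comp g, ⟨?_, ?_, ?_⟩, rfl, rfl⟩
    · rintro ⟨r, hr⟩
      refine hg' A.1 A.2 LinearMap.id r ?_
      rw [LinearMap.comp_id]
      rw [hr]; exact Function.bijective_id
    · rintro ⟨s, hs⟩
      refine hg' W hW s LinearMap.id ?_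
      rw [LinearMap.id_comp]
      rw [hs]; exact Function.bijective_id
    · intro V a b hab
      by_contra hcon
      push Not at hcon
      have ha : InRad a := by
        by_contra hc; exact hcon.1 (splitMono_of_not_inRad A.2 hc)
      have hb : InRad (X := V) (Y := W) b := by
        by_contra hc; exact hcon.2 (splitEpi_of_not_inRad hW hc)
      apply hpi
      rw [← hab]
      have h1 : (k.comp i).comp b ∈ radPow R (n + 1) V B.1 :=
        radPow_succ_mem (X := V) (Z := W) n hb hk'
      exact radPow_succ_mem (X := A.1) (Z := V) (n + 1) ha h1

theorem path_of_not_radInf (A B : IndecModA R) (h : A.1.M →ₗ[R] B.1.M) (hh : ¬ InRadInf h) :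
    Relation.ReflTransGen ARArrow (ARVertex.mk A) (ARVertex.mk B) := by
  classical
  unfold InRadInf at hh
  push Not at hh
  obtain ⟨m, hm⟩ : ∃ m, Nat.find hh = m + 1 := by
    refine ⟨Nat.find hh - 1, ?_⟩
    have : Nat.find hh ≠ 0 := by
      intro h0
      have := Nat.find_spec hh
      rw [h0] at this
      exact this (AddSubgroup.mem_top _)
    omega
  refine path_of_radPow m A B h ?_ ?_
  · by_contra hc
    exact Nat.find_min hh (m := m) (by omega) hc
  · rw [← hm]; exact Nat.find_spec hh

end Radical


section MonoStep

variable {R : Type u} [Ring R]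

/-- Modules receiving no nonzero map from a module in `Q`. -/
def freeC (Q : ModA R → Prop) (N : ModA R) : Prop :=
  ∀ Z, Q Z → ∀ k : Z.M →ₗ[R] N.M, k = 0

/-- Modules without nonzero maps to modules in `freeC Q`. -/
def torsC (Q : ModA R → Prop) (V : ModA R) : Prop :=
  ∀ N, freeC Q N → ∀ k : V.M →ₗ[R] N.M, k = 0

/-- Every factorization of `f` through a module in `freeC Q` starts with a split mono. -/
def RigidMono (Q : ModA R → Prop) {X V : ModA R} (f : X.M →ₗ[R] V.M) : Prop :=
  ∀ N, freeC Q N → ∀ (g : X.M →ₗ[R] N.M) (h : N.M →ₗ[R] V.M), (∀ x, h (g x) = f x) →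
    ∃ r : N.M →ₗ[R] X.M, ∀ x, r (g x) = x

theorem mono_step (Q : ModA R → Prop)
    (hsplit : ∀ W : ModA R, ∃ V N, torsC Q V ∧ freeC Q N ∧ Nonempty (W.M ≃ₗ[R] V.M × N.M))
    {X X' V : ModA R} (hX : freeC Q X) (hX' : freeC Q X') (hV : torsC Q V)
    (f : X.M →ₗ[R] V.M) (hf : Function.Injective f) (hP : RigidMono Q f)
    (g : X.M →ₗ[R] X'.M) (hg : IsIrred g) :
    ∃ (V' : ModA R) (f' : X'.M →ₗ[R] V'.M) (u : V.M →ₗ[R] V'.M),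
      (∀ x, f' (g x) = u (f x)) ∧
      (∀ z v, f' z = u v → ∃ x, z = g x ∧ v = f x) ∧
      (∀ w, ∃ z v, w = f' z + u v) ∧
      Function.Injective f' ∧ torsC Q V' ∧ RigidMono Q f' := by
  let D : Submodule R (V.M × X'.M) := LinearMap.range (f.prod (-g))
  let V' : ModA R := ModA.of R ((V.M × X'.M) ⧸ D)
  let f' : X'.M →ₗ[R] V'.M := D.mkQ.comp (LinearMap.inr R V.M X'.M)
  let u : V.M →ₗ[R] V'.M := D.mkQ.comp (LinearMap.inl R V.M X'.M)
  have hcomm : ∀ x, f' (g x) = u (f x) := by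
    intro x
    refine ((Submodule.Quotient.eq D).mpr ⟨-x, ?_⟩)
    simp
  have hex : ∀ z v, f' z = u v → ∃ x, z = g x ∧ v = f x := by
    intro z v h
    obtain ⟨x, hx⟩ := (Submodule.Quotient.eq D).mp h
    simp at hx
    refine ⟨-x, ?_, ?_⟩
    · simp [← hx.2]
    · simp [hx.1]
  have hsur : ∀ w, ∃ z v, w = f' z + u v := by
    intro w
    obtain ⟨⟨v, z⟩, rfl⟩ := D.mkQ_surjective w
    refine ⟨z, v, ?_⟩
    change D.mkQ _ = D.mkQ _ + D.mkQ _
    rw [← map_add]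
    simp
  clear_value f' u V'
  clear D
  have hf' : Function.Injective f' := by
    rw [injective_iff_map_eq_zero]
    intro z hz
    obtain ⟨x, rfl, hx⟩ := hex z 0 (by rw [hz, map_zero])
    rw [hf (hx.symm.trans (map_zero f).symm), map_zero]
  refine ⟨V', f', u, hcomm, hex, hsur, hf', ?_, ?_⟩
  · -- the module is torsion
    obtain ⟨A, C, hA, hC, ⟨e⟩⟩ := hsplit V'
    let p : V'.M →ₗ[R] C.M := (LinearMap.snd R A.M C.M).comp e.toLinearMap
    let q : V'.M →ₗ[R] A.M := (LinearMap.fst R A.M C.M).comp e.toLinearMap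
    let iA : A.M →ₗ[R] V'.M := e.symm.toLinearMap.comp (LinearMap.inl R A.M C.M)
    let iC : C.M →ₗ[R] V'.M := e.symm.toLinearMap.comp (LinearMap.inr R A.M C.M)
    have hdec : ∀ w, w = iA (q w) + iC (p w) := by
      intro w
      apply e.injective
      rw [map_add]
      simp [iA, iC, p, q]
    have hpi : ∀ c, p (iC c) = c := by intro c; simp [p, iC]
    have hpA : ∀ a, p (iA a) = 0 := by intro c; simp [p, iA]
    have hpu : ∀ v, p (u v) = 0 := fun v => LinearMap.congr_fun (hV C hC (p.comp u)) v
    suffices hp0 : ∀ z, p (f' z) = 0 by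
      have hp : ∀ w, p w = 0 := by
        intro w
        obtain ⟨z, v, rfl⟩ := hsur w
        rw [map_add, hp0, hpu, add_zero]
      intro N hN k
      ext w
      have h1 := hdec w
      rw [hp, map_zero, add_zero] at h1
      rw [h1]
      exact LinearMap.congr_fun (hA N hN (k.comp iA)) _
    rcases irred_inj_or_surj hg with hgi | hgs
    swap
    · intro z
      obtain ⟨x, rfl⟩ := hgs z
      rw [hcomm, hpu]
    have hui : ∀ v, u v = 0 → v = 0 := by
      intro v hv
      obtain ⟨x, hx, rfl⟩ := hex 0 v (by rw [hv, map_zero])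
      rw [hgi (hx.symm.trans (map_zero g).symm), map_zero]
    let K : Submodule R X'.M := LinearMap.ker (p.comp f')
    have hgK : ∀ x, g x ∈ K := by
      intro x
      change p (f' (g x)) = 0
      rw [hcomm, hpu]
    rcases hg.2.2 (ModA.of R K) (g.codRestrict K hgK) K.subtype (by ext; rfl) with
      ⟨r, hr⟩ | ⟨s, hs⟩
    swap
    · intro z
      have h1 := LinearMap.congr_fun hs z
      have h2 : K.subtype (s z) ∈ K := Subtype.property (p := (· ∈ K)) (s z)
      have h3 : K.subtype (s z) = z := h1
      rw [h3] at h2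
      exact h2
    exfalso
    let L : Submodule R (X'.M × V.M × C.M) :=
      LinearMap.ker ((f'.comp (LinearMap.fst R X'.M (V.M × C.M))) -
        ((u.coprod iC).comp (LinearMap.snd R X'.M (V.M × C.M))))
    have hL : ∀ z v c, (z, v, c) ∈ L ↔ f' z = u v + iC c := by
      intro z v c
      simp [L, sub_eq_zero]
    have hLF : freeC Q (ModA.of R L) := by
      intro Z hZ k₀
      let k : Z.M →ₗ[R] L := k₀
      have k1 : ∀ z, (k z : X'.M × V.M × C.M).1 = 0 := fun z =>
        LinearMap.congr_fun (hX' Z hZ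
          (((LinearMap.fst R X'.M (V.M × C.M)).comp L.subtype).comp k)) z
      have k2 : ∀ z, (k z : X'.M × V.M × C.M).2.2 = 0 := fun z =>
        LinearMap.congr_fun (hC Z hZ
          (((LinearMap.snd R V.M C.M).comp ((LinearMap.snd R X'.M (V.M × C.M)).comp
            L.subtype)).comp k)) z
      refine (LinearMap.ext fun z => ?_ : k = 0)
      apply Subtype.ext
      have h1 := (hL _ _ _).mp (k z).2
      rw [k1, k2, map_zero, map_zero, add_zero] at h1
      have h2 := hui _ h1.symm
      exact Prod.ext (k1 z) (Prod.ext h2 (k2 z))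
    let jl : X.M →ₗ[R] X'.M × V.M × C.M := g.prod (f.prod 0)
    have hjl : ∀ x, jl x ∈ L := by
      intro x
      refine (hL _ _ _).mpr ?_
      simp [hcomm]
    obtain ⟨r', hr'⟩ := hP (ModA.of R L) hLF (jl.codRestrict L hjl)
      ((LinearMap.fst R V.M C.M).comp ((LinearMap.snd R X'.M (V.M × C.M)).comp L.subtype))
      (fun x => rfl)
    let sm : (K × L) →ₗ[R] X'.M := K.subtype.coprod
      ((LinearMap.fst R X'.M (V.M × C.M)).comp L.subtype)
    let tm : (K × L) →ₗ[R] X.M := LinearMap.coprod r r'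
    obtain ⟨ρ, hρ⟩ := factor_surj sm tm (by
      intro z
      obtain ⟨z', v, hz⟩ := hsur (iC (p (f' z)))
      have hz' : (z', -v, p (f' z)) ∈ L := by
        rw [hL, hz]; simp
      have hz2 : z - z' ∈ K := by
        change p (f' (z - z')) = 0
        rw [map_sub, (hL _ _ _).mp hz', map_sub, map_add, hpu, hpi]
        simp
      refine ⟨(⟨z - z', hz2⟩, ⟨_, hz'⟩), ?_⟩
      simp [sm]) (by
      rintro ⟨⟨y, hy⟩, ⟨⟨z, v, c⟩, hl⟩⟩ h
      have hyz : y = -z := by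
        simp [sm] at h
        exact eq_neg_of_add_eq_zero_left h
      subst hyz
      have hy' : p (f' (-z)) = 0 := hy
      have hl' := (hL _ _ _).mp hl
      have hc : c = 0 := by
        rw [map_neg, hl', map_neg, map_add, hpu, hpi, zero_add, neg_eq_zero] at hy'
        exact hy'
      subst hc
      rw [map_zero, add_zero] at hl'
      obtain ⟨x, rfl, rfl⟩ := hex _ _ hl'
      have e1 : r' ⟨(g x, f x, 0), hl⟩ = x := hr' x
      have e2 : r ⟨-g x, hy⟩ = -x := by
        have := LinearMap.congr_fun hr (-x)
        refine Eq.trans (congrArg r (Subtype.ext ?_)) this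
        exact (map_neg g x).symm
      change r ⟨-g x, hy⟩ + r' ⟨(g x, f x, 0), hl⟩ = 0
      rw [e1, e2]; simp)
    apply hg.1
    refine ⟨ρ, ?_⟩
    ext x
    have h1 := hρ (⟨g x, hgK x⟩, 0)
    have h2 : sm (⟨g x, hgK x⟩, 0) = g x := by simp [sm]
    rw [h2] at h1
    change ρ (g x) = x
    rw [h1]
    have h3 : r ⟨g x, hgK x⟩ = x := LinearMap.congr_fun hr x
    change r ⟨g x, hgK x⟩ + r' 0 = x
    rw [h3, map_zero, add_zero]
  · -- rigidity
    intro N hN k h hkh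
    let L : Submodule R (N.M × V.M) := LinearMap.ker (h.coprod (-u))
    have hL : ∀ n v, (n, v) ∈ L ↔ h n = u v := by
      intro n v
      simp [L, ← sub_eq_add_neg, sub_eq_zero]
    have hLF : freeC Q (ModA.of R L) := by
      intro Z hZ c₀
      let c : Z.M →ₗ[R] L := c₀
      have k1 : ∀ z, (c z : N.M × V.M).1 = 0 := fun z =>
        LinearMap.congr_fun (hN Z hZ (((LinearMap.fst R N.M V.M).comp L.subtype).comp c)) z
      obtain ⟨d, hd⟩ := factor_inj f (((LinearMap.snd R N.M V.M).comp L.subtype).comp c) hf (by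
        intro z
        have h1 := (hL _ _).mp (c z).2
        rw [k1, map_zero] at h1
        obtain ⟨x, _, hx⟩ := hex 0 _ (by rw [map_zero]; exact h1)
        exact ⟨x, hx.symm⟩)
      have hd0 := hX Z hZ d
      refine (LinearMap.ext fun z => ?_ : c = 0)
      apply Subtype.ext
      refine Prod.ext (k1 z) ?_
      have := hd z
      rw [hd0, LinearMap.zero_apply, map_zero] at this
      exact this.symm
    let jl : X.M →ₗ[R] N.M × V.M := (k.comp g).prod f
    have hjl : ∀ x, jl x ∈ L := by
      intro x
      refine (hL _ _).mpr ?_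
      change h (k (g x)) = u (f x)
      rw [hkh, hcomm]
    obtain ⟨r, hr⟩ := hP (ModA.of R L) hLF (jl.codRestrict L hjl)
      ((LinearMap.snd R N.M V.M).comp L.subtype) (fun x => rfl)
    let sm : (L × X'.M) →ₗ[R] N.M := LinearMap.coprod ((LinearMap.fst R N.M V.M).comp L.subtype) k
    let tm : (L × X'.M) →ₗ[R] X'.M := LinearMap.coprod (g.comp r) LinearMap.id
    obtain ⟨ρ, hρ⟩ := factor_surj sm tm (by
      intro n
      obtain ⟨z, v, hz⟩ := hsur (h n)
      have hl : (n - k z, v) ∈ L := by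
        rw [hL, map_sub, hkh, hz]; simp
      refine ⟨(⟨_, hl⟩, z), ?_⟩
      simp [sm]) (by
      rintro ⟨⟨⟨n, v⟩, hl⟩, z⟩ hz
      have hn : n = -k z := by
        simp [sm] at hz
        exact eq_neg_of_add_eq_zero_left hz
      subst hn
      have hl' := (hL _ _).mp hl
      rw [map_neg, hkh, ← map_neg] at hl'
      obtain ⟨x, hx, rfl⟩ := hex _ _ hl'
      have hz' : z = -g x := by rw [← hx, neg_neg]
      subst hz'
      have e1 : r ⟨(-k (-g x), f x), hl⟩ = x := by
        refine Eq.trans (congrArg r (Subtype.ext ?_)) (hr x)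
        refine Prod.ext ?_ rfl
        change -k (-g x) = k (g x)
        simp
      change g (r ⟨(-k (-g x), f x), hl⟩) + (-g x) = 0
      rw [e1]; simp)
    refine ⟨ρ, fun z => ?_⟩
    have h1 := hρ (0, z)
    have h2 : sm (0, z) = k z := by simp [sm]
    rw [h2] at h1
    rw [h1]
    change g (r 0) + z = z
    simp

end MonoStep


section EpiStep

variable {R : Type u} [Ring R]

/-- Modules with no nonzero map to a module in `Q`. -/
def cotorsC (Q : ModA R → Prop) (N : ModA R) : Prop :=
  ∀ Z, Q Z → ∀ k : N.M →ₗ[R] Z.M, k = 0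

/-- Modules without nonzero maps from modules in `cotorsC Q`. -/
def cofreeC (Q : ModA R → Prop) (U : ModA R) : Prop :=
  ∀ N, cotorsC Q N → ∀ k : N.M →ₗ[R] U.M, k = 0

/-- Every factorization of `f` through a module in `cotorsC Q` ends with a split epi. -/
def RigidEpi (Q : ModA R → Prop) {U Y : ModA R} (f : U.M →ₗ[R] Y.M) : Prop :=
  ∀ N, cotorsC Q N → ∀ (h : U.M →ₗ[R] N.M) (g : N.M →ₗ[R] Y.M), (∀ x, g (h x) = f x) →
    ∃ s : Y.M →ₗ[R] N.M, ∀ y, g (s y) = y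

theorem epi_step (Q : ModA R → Prop)
    (hsplit : ∀ W : ModA R, ∃ A C, cofreeC Q A ∧ cotorsC Q C ∧ Nonempty (W.M ≃ₗ[R] A.M × C.M))
    {Y Y' U : ModA R} (hY : cotorsC Q Y) (hY' : cotorsC Q Y') (hU : cofreeC Q U)
    (f : U.M →ₗ[R] Y.M) (hf : Function.Surjective f) (hP : RigidEpi Q f)
    (g : Y'.M →ₗ[R] Y.M) (hg : IsIrred g) :
    ∃ (U' : ModA R) (f' : U'.M →ₗ[R] Y'.M) (a : U'.M →ₗ[R] U.M),
      (∀ w, g (f' w) = f (a w)) ∧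
      (∀ y x, g y = f x → ∃ w, f' w = y ∧ a w = x) ∧
      (∀ w, f' w = 0 → a w = 0 → w = 0) ∧
      Function.Surjective f' ∧ cofreeC Q U' ∧ RigidEpi Q f' := by
  let D : Submodule R (U.M × Y'.M) := LinearMap.ker (f.coprod (-g))
  let U' : ModA R := ModA.of R D
  let f' : U'.M →ₗ[R] Y'.M := (LinearMap.snd R U.M Y'.M).comp D.subtype
  let a : U'.M →ₗ[R] U.M := (LinearMap.fst R U.M Y'.M).comp D.subtype
  have hD : ∀ x y, (x, y) ∈ D ↔ f x = g y := by
    intro n v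
    simp [D, ← sub_eq_add_neg, sub_eq_zero]
  have hcomm : ∀ w, g (f' w) = f (a w) := by
    rintro ⟨⟨x, y⟩, h⟩
    exact ((hD _ _).mp h).symm
  have hex : ∀ y x, g y = f x → ∃ w, f' w = y ∧ a w = x := by
    intro y x h
    exact ⟨⟨(x, y), (hD _ _).mpr h.symm⟩, rfl, rfl⟩
  have hinj : ∀ w, f' w = 0 → a w = 0 → w = 0 := by
    intro w h1 h2
    exact Subtype.ext (Prod.ext h2 h1)
  clear_value f' a U'
  clear hD D
  have hf' : Function.Surjective f' := by
    intro y
    obtain ⟨x, hx⟩ := hf (g y)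
    obtain ⟨w, hw, _⟩ := hex y x hx.symm
    exact ⟨w, hw⟩
  refine ⟨U', f', a, hcomm, hex, hinj, hf', ?_, ?_⟩
  · obtain ⟨A, C, hA, hC, ⟨e⟩⟩ := hsplit U'
    let p : U'.M →ₗ[R] C.M := (LinearMap.snd R A.M C.M).comp e.toLinearMap
    let q : U'.M →ₗ[R] A.M := (LinearMap.fst R A.M C.M).comp e.toLinearMap
    let iA : A.M →ₗ[R] U'.M := e.symm.toLinearMap.comp (LinearMap.inl R A.M C.M)
    let iC : C.M →ₗ[R] U'.M := e.symm.toLinearMap.comp (LinearMap.inr R A.M C.M)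
    have hdec : ∀ w, w = iA (q w) + iC (p w) := by
      intro w
      apply e.injective
      rw [map_add]
      simp [iA, iC, p, q]
    have hpi : ∀ c, p (iC c) = c := by intro c; simp [p, iC]
    have haC : ∀ c, a (iC c) = 0 := fun c => LinearMap.congr_fun (hU C hC (a.comp iC)) c
    suffices hp0 : ∀ c, f' (iC c) = 0 by
      have hi0 : ∀ c, iC c = 0 := fun c => hinj _ (hp0 c) (haC c)
      intro N hN k
      ext n
      have h1 := hdec (k n)
      rw [hi0, add_zero] at h1
      have h2 : q (k n) = 0 := LinearMap.congr_fun (hA N hN (q.comp k)) n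
      rw [h1, h2, map_zero]
      rfl
    rcases irred_inj_or_surj hg with hgi | hgs
    · intro c
      apply hgi
      rw [hcomm, haC, map_zero, map_zero]
    have has : Function.Surjective a := by
      intro x
      obtain ⟨y, hy⟩ := hgs (f x)
      obtain ⟨w, _, hw⟩ := hex y x hy
      exact ⟨w, hw⟩
    let K : Submodule R Y'.M := LinearMap.range (f'.comp iC)
    have hKg : K ≤ LinearMap.ker g := by
      rintro _ ⟨c, rfl⟩
      change g (f' (iC c)) = 0
      rw [hcomm, haC, map_zero]
    rcases hg.2.2 (ModA.of R (Y'.M ⧸ K)) K.mkQ (K.liftQ g hKg) (LinearMap.ext fun x => rfl) with ⟨r, hr⟩ | ⟨σ, hσ⟩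
    · intro c
      have h1 : r (K.mkQ (f' (iC c))) = f' (iC c) := LinearMap.congr_fun hr _
      have h2 : K.mkQ (f' (iC c)) = 0 := (Submodule.Quotient.mk_eq_zero K).mpr ⟨c, rfl⟩
      rw [← h1]
      exact (congrArg r h2).trans (map_zero r)
    exfalso
    let E : Submodule R (Y'.M × U.M × C.M) := LinearMap.range (f'.prod ((-a).prod (-p)))
    let m : (Y'.M × U.M × C.M) →ₗ[R] (Y'.M × U.M × C.M) ⧸ E := E.mkQ
    have hm : ∀ x y, m x = m y ↔ ∃ w, (f' w, -a w, -p w) = x - y := by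
      intro x y
      exact Submodule.Quotient.eq E
    have hLF : cotorsC Q (ModA.of R ((Y'.M × U.M × C.M) ⧸ E)) := by
      intro Z hZ k₀
      let k : ((Y'.M × U.M × C.M) ⧸ E) →ₗ[R] Z.M := k₀
      have k1 : ∀ y, k (m (y, 0, 0)) = 0 := fun y =>
        LinearMap.congr_fun (hY' Z hZ ((k.comp m).comp (LinearMap.inl R Y'.M (U.M × C.M)))) y
      have k2 : ∀ c, k (m (0, 0, c)) = 0 := fun c =>
        LinearMap.congr_fun (hC Z hZ ((k.comp m).comp ((LinearMap.inr R Y'.M (U.M × C.M)).comp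
          (LinearMap.inr R U.M C.M)))) c
      refine (LinearMap.ext fun z => ?_ : k = 0)
      obtain ⟨⟨y, x, c⟩, rfl⟩ := E.mkQ_surjective z
      obtain ⟨w, rfl⟩ := has x
      have h1 : m (y, a w, c) = m (y + f' w, 0, 0) + m (0, 0, c - p w) := by
        rw [← map_add, hm]
        refine ⟨-w, ?_⟩
        simp
      change k (m (y, a w, c)) = 0
      rw [h1, map_add, k1, k2, add_zero]
    have hEg : E ≤ LinearMap.ker (g.coprod (f.coprod (0 : C.M →ₗ[R] Y.M))) := by
      rintro _ ⟨w, rfl⟩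
      simp [hcomm]
    obtain ⟨σ', hσ'⟩ := hP (ModA.of R ((Y'.M × U.M × C.M) ⧸ E)) hLF
      (m.comp ((LinearMap.inr R Y'.M (U.M × C.M)).comp (LinearMap.inl R U.M C.M)))
      (E.liftQ _ hEg) (by
        intro x
        refine (Submodule.liftQ_apply _ _ _).trans ?_
        simp)
    let sm : Y'.M →ₗ[R] (Y'.M ⧸ K) × ((Y'.M × U.M × C.M) ⧸ E) :=
      K.mkQ.prod (m.comp (LinearMap.inl R Y'.M (U.M × C.M)))
    let tm : Y.M →ₗ[R] (Y'.M ⧸ K) × ((Y'.M × U.M × C.M) ⧸ E) := LinearMap.prod σ σ'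
    obtain ⟨ρ, hρ⟩ := factor_inj sm tm (by
      rw [injective_iff_map_eq_zero]
      intro y hy
      have h1 : K.mkQ y = 0 := congrArg Prod.fst hy
      have h2 : m (y, 0, 0) = m 0 := (congrArg Prod.snd hy).trans (map_zero m).symm
      obtain ⟨c, rfl⟩ := (Submodule.Quotient.mk_eq_zero K).mp h1
      obtain ⟨w, hw⟩ := (hm _ _).mp h2
      simp at hw
      obtain ⟨hw1, hw2, hw3⟩ := hw
      have h3 : w - iC c = 0 := hinj _ (by rw [map_sub, hw1, sub_self])
        (by rw [map_sub, hw2, haC, sub_self])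
      have h4 : c = 0 := by
        have := congrArg p h3
        rw [map_sub, hw3, hpi, map_zero, zero_sub, neg_eq_zero] at this
        exact this
      rw [h4]; simp) (by
      intro y
      obtain ⟨y1, hy1⟩ := K.mkQ_surjective (σ y)
      obtain ⟨⟨y2, x, c⟩, hy2⟩ := E.mkQ_surjective (σ' y)
      have e1 : g y1 = y := by
        have h1 : K.liftQ g hKg (σ y) = y := LinearMap.congr_fun hσ y
        rw [← h1]
        refine Eq.trans ?_ (congrArg (K.liftQ g hKg) hy1)
        exact (Submodule.liftQ_apply _ _ _).symm
      have e2 : g y2 + f x = y := by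
        refine Eq.trans ?_ ((congrArg (E.liftQ _ hEg) hy2).trans (hσ' y))
        refine Eq.trans ?_ (Submodule.liftQ_apply _ _ _).symm
        simp
      obtain ⟨w0, rfl⟩ := has x
      obtain ⟨w, hw1, hw2⟩ := hex (y1 - (y2 + f' w0)) 0 (by
        rw [map_sub, map_add, hcomm, e1, e2, sub_self, map_zero])
      refine ⟨y1 - f' (iC (p w - (c - p w0))), Prod.ext ?_ ?_⟩
      · refine Eq.trans ?_ hy1
        refine (Submodule.Quotient.eq K).mpr ?_
        refine ⟨-(p w - (c - p w0)), ?_⟩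
        simp
      · refine Eq.trans ?_ hy2
        refine (hm _ _).mpr ⟨w - iC (p w - (c - p w0)) + w0, ?_⟩
        have e3 : f' w = y1 - y2 - f' w0 := by rw [hw1]; abel
        refine Prod.ext ?_ (Prod.ext ?_ ?_)
        · change f' (w - iC (p w - (c - p w0)) + w0) = y1 - f' (iC (p w - (c - p w0))) - y2
          rw [map_add, map_sub f', e3]; abel
        · change -a (w - iC (p w - (c - p w0)) + w0) = 0 - a w0
          rw [map_add, map_sub a, haC, hw2]; simp
        · change -p (w - iC (p w - (c - p w0)) + w0) = 0 - c
          rw [map_add, map_sub p w, hpi]; abel)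
    apply hg.2.1
    refine ⟨ρ, ?_⟩
    ext y
    have h1 : K.mkQ (ρ y) = σ y := congrArg Prod.fst (hρ y)
    have h2 : K.liftQ g hKg (σ y) = y := LinearMap.congr_fun hσ y
    change g (ρ y) = y
    rw [← h2]
    refine Eq.trans ?_ (congrArg (K.liftQ g hKg) h1)
    rw [h2]
    exact (Submodule.liftQ_apply _ _ _).symm
  · intro N hN k h hkh
    let E : Submodule R (U.M × N.M) := LinearMap.range (a.prod (-k))
    let m : (U.M × N.M) →ₗ[R] (U.M × N.M) ⧸ E := E.mkQ
    have hm : ∀ x y, m x = m y ↔ ∃ w, (a w, -k w) = x - y := by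
      intro x y
      exact Submodule.Quotient.eq E
    have hLF : cotorsC Q (ModA.of R ((U.M × N.M) ⧸ E)) := by
      intro Z hZ c₀
      let c : ((U.M × N.M) ⧸ E) →ₗ[R] Z.M := c₀
      have k1 : ∀ n, c (m (0, n)) = 0 := fun n =>
        LinearMap.congr_fun (hN Z hZ ((c.comp m).comp (LinearMap.inr R U.M N.M))) n
      have k2 : ∀ w, c (m (a w, 0)) = 0 := by
        intro w
        have : m (a w, 0) = m (0, k w) := by
          rw [hm]; exact ⟨w, by simp⟩
        rw [this, k1]
      obtain ⟨d, hd⟩ := factor_surj f ((c.comp m).comp (LinearMap.inl R U.M N.M)) hf (by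
        intro x hx
        obtain ⟨w, _, rfl⟩ := hex 0 x (by rw [hx, map_zero])
        exact k2 w)
      have hd0 := hY Z hZ d
      have k3 : ∀ x, c (m (x, 0)) = 0 := by
        intro x
        have := hd x
        rw [hd0] at this
        exact this.symm
      refine (LinearMap.ext fun z => ?_ : c = 0)
      obtain ⟨⟨x, n⟩, rfl⟩ := E.mkQ_surjective z
      have h1 : m (x, n) = m (x, 0) + m (0, n) := by
        rw [← map_add]; simp
      change c (m (x, n)) = 0
      rw [h1, map_add, k3, k1, add_zero]
    have hEg : E ≤ LinearMap.ker (f.coprod (g.comp h)) := by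
      rintro _ ⟨w, rfl⟩
      simp [hkh, hcomm]
    obtain ⟨σ, hσ⟩ := hP (ModA.of R ((U.M × N.M) ⧸ E)) hLF
      (m.comp (LinearMap.inl R U.M N.M)) (E.liftQ _ hEg) (by
        intro x
        refine (Submodule.liftQ_apply _ _ _).trans ?_
        simp)
    let sm : N.M →ₗ[R] ((U.M × N.M) ⧸ E) × Y'.M := (m.comp (LinearMap.inr R U.M N.M)).prod h
    let tm : Y'.M →ₗ[R] ((U.M × N.M) ⧸ E) × Y'.M := LinearMap.prod (σ.comp g) LinearMap.id
    obtain ⟨ρ, hρ⟩ := factor_inj sm tm (by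
      rw [injective_iff_map_eq_zero]
      intro n hn
      have h1 : m (0, n) = m 0 := (congrArg Prod.fst hn).trans (map_zero m).symm
      have h2 : h n = 0 := congrArg Prod.snd hn
      obtain ⟨w, hw⟩ := (hm _ _).mp h1
      simp at hw
      obtain ⟨hw1, rfl⟩ := hw
      rw [map_neg, hkh, neg_eq_zero] at h2
      rw [hinj w h2 hw1]; simp) (by
      intro y
      obtain ⟨⟨x, n⟩, hxn⟩ := E.mkQ_surjective (σ (g y))
      have e2 : f x + g (h n) = g y := by
        refine Eq.trans ?_ ((congrArg (E.liftQ _ hEg) hxn).trans (hσ (g y)))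
        refine Eq.trans ?_ (Submodule.liftQ_apply _ _ _).symm
        simp
      obtain ⟨w, hw1, hw2⟩ := hex (y - h n) x (by rw [map_sub, ← e2]; simp)
      refine ⟨n + k w, Prod.ext ?_ ?_⟩
      · refine Eq.trans ?_ hxn
        refine (hm _ _).mpr ⟨-w, ?_⟩
        simp [hw2]
      · change h (n + k w) = y
        rw [map_add, hkh, hw1]; simp)
    refine ⟨ρ, fun y => ?_⟩
    exact congrArg Prod.snd (hρ y)

end EpiStep


section KeyLemma

variable {R : Type u} [Ring R]

/-- There is a nonzero homomorphism from `A` to `B`. -/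
def HStep (A B : IndecModA R) : Prop := ∃ k : A.1.M →ₗ[R] B.1.M, k ≠ 0

/-- There is a chain of nonzero homomorphisms between indecomposables from `A` to `B`. -/
def Conn (A B : IndecModA R) : Prop := Relation.ReflTransGen HStep A B

theorem arr_rep {x y : ARVertex R} (h : ARArrow x y) (X Y : IndecModA R)
    (hX : ARVertex.mk X = x) (hY : ARVertex.mk Y = y) :
    ∃ f : X.1.M →ₗ[R] Y.1.M, IsIrred f := by
  obtain ⟨X', Y', f, hf, h1, h2⟩ := h
  obtain ⟨e⟩ := iso_of_mk_eq (hX.trans h1.symm)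
  obtain ⟨e'⟩ := iso_of_mk_eq (h2.trans hY.symm)
  exact ⟨_, irred_iso hf e e'⟩

theorem conn_of_arr {x y : ARVertex R} (h : ARArrow x y) (X Y : IndecModA R)
    (hX : ARVertex.mk X = x) (hY : ARVertex.mk Y = y) : Conn X Y := by
  obtain ⟨f, hf⟩ := arr_rep h X Y hX hY
  exact Relation.ReflTransGen.single ⟨f, irred_ne_zero X.2 hf⟩

theorem conn_of_mk_eq {X Y : IndecModA R} (h : ARVertex.mk X = ARVertex.mk Y) : Conn X Y := by
  obtain ⟨e⟩ := iso_of_mk_eq h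
  refine Relation.ReflTransGen.single ⟨e.toLinearMap, fun h0 => ?_⟩
  have := X.2.1
  obtain ⟨a, ha⟩ := exists_ne (0 : X.1.M)
  apply ha
  apply e.injective
  rw [map_zero]
  exact LinearMap.congr_fun h0 a

theorem exists_rep (x : ARVertex R) : ∃ X : IndecModA R, ARVertex.mk X = x :=
  Quotient.exists_rep x

theorem conn_of_path {x y : ARVertex R} (h : Relation.ReflTransGen ARArrow x y) :
    ∀ X Y : IndecModA R, ARVertex.mk X = x → ARVertex.mk Y = y → Conn X Y := by
  induction h with
  | refl => intro X Y hX hY; exact conn_of_mk_eq (hX.trans hY.symm)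
  | tail _ h ih =>
    rename_i b c _
    intro X Y hX hY
    obtain ⟨Z, hZ⟩ := exists_rep b
    exact (ih X Z hX hZ).trans (conn_of_arr h Z Y hZ hY)

theorem split_tors (Y : IndecModA R) (W : ModA R) :
    ∃ V N, torsC (fun Z => ∃ hZ : Z.IsIndec, Conn Y ⟨Z, hZ⟩) V ∧
      freeC (fun Z => ∃ hZ : Z.IsIndec, Conn Y ⟨Z, hZ⟩) N ∧
      Nonempty (W.M ≃ₗ[R] V.M × N.M) := by
  have hT0 : ∀ (Q : ModA R → Prop) (W : ModA R), Subsingleton W.M → torsC Q W := by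
    intro Q W h N _ k
    ext w
    rw [Subsingleton.elim w 0, map_zero, map_zero]
  have hF0 : ∀ (Q : ModA R → Prop) (W : ModA R), Subsingleton W.M → freeC Q W := by
    intro Q W h N _ k
    ext w
    exact Subsingleton.elim _ _
  have hP : Subsingleton (ModA.of R PUnit).M := inferInstanceAs (Subsingleton PUnit)
  refine decomp_induct (fun W => ∃ V N, torsC (fun Z => ∃ hZ : Z.IsIndec, Conn Y ⟨Z, hZ⟩) V ∧
      freeC (fun Z => ∃ hZ : Z.IsIndec, Conn Y ⟨Z, hZ⟩) N ∧
      Nonempty (W.M ≃ₗ[R] V.M × N.M)) ?_ ?_ ?_ W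
  · intro W hW
    exact ⟨W, ModA.of R PUnit, hT0 _ _ hW, hF0 _ _ hP,
      ⟨(LinearEquiv.prodUnique (M₂ := PUnit.{u+1})).symm⟩⟩
  · intro W hW
    by_cases h : Conn Y ⟨W, hW⟩
    · exact ⟨W, ModA.of R PUnit, fun N hN k => hN W ⟨hW, h⟩ k, hF0 _ _ hP,
        ⟨(LinearEquiv.prodUnique (M₂ := PUnit.{u+1})).symm⟩⟩
    · refine ⟨ModA.of R PUnit, W, hT0 _ _ hP, ?_,
        ⟨(LinearEquiv.uniqueProd (M₂ := PUnit.{u+1})).symm⟩⟩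
      rintro Z ⟨hZ, hc⟩ k
      by_contra hk
      exact h (hc.tail ⟨k, hk⟩)
  · rintro W V N ⟨A, B, hA, hB, ⟨e⟩⟩ ⟨A', B', hA', hB', ⟨e'⟩⟩ ⟨e''⟩
    refine ⟨ModA.of R (A.M × A'.M), ModA.of R (B.M × B'.M), ?_, ?_,
      ⟨(e''.trans (e.prodCongr e')).trans (LinearEquiv.prodProdProdComm R _ _ _ _)⟩⟩
    · intro F hF k
      have h1 := hA F hF (k.comp (LinearMap.inl R A.M A'.M))
      have h2 := hA' F hF (k.comp (LinearMap.inr R A.M A'.M))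
      exact LinearMap.prod_ext h1 h2
    · intro Z hZ k
      have h1 := hB Z hZ ((LinearMap.fst R B.M B'.M).comp k)
      have h2 := hB' Z hZ ((LinearMap.snd R B.M B'.M).comp k)
      ext z
      exact Prod.ext (LinearMap.congr_fun h1 z) (LinearMap.congr_fun h2 z)

theorem split_cotors (X : IndecModA R) (W : ModA R) :
    ∃ A C, cofreeC (fun Z => ∃ hZ : Z.IsIndec, Conn ⟨Z, hZ⟩ X) A ∧
      cotorsC (fun Z => ∃ hZ : Z.IsIndec, Conn ⟨Z, hZ⟩ X) C ∧
      Nonempty (W.M ≃ₗ[R] A.M × C.M) := by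
  have hT0 : ∀ (Q : ModA R → Prop) (W : ModA R), Subsingleton W.M → cotorsC Q W := by
    intro Q W h N _ k
    ext w
    rw [Subsingleton.elim w 0, map_zero, map_zero]
  have hF0 : ∀ (Q : ModA R → Prop) (W : ModA R), Subsingleton W.M → cofreeC Q W := by
    intro Q W h N _ k
    ext w
    exact Subsingleton.elim _ _
  have hP : Subsingleton (ModA.of R PUnit).M := inferInstanceAs (Subsingleton PUnit)
  refine decomp_induct (fun W => ∃ A C, cofreeC (fun Z => ∃ hZ : Z.IsIndec, Conn ⟨Z, hZ⟩ X) A ∧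
      cotorsC (fun Z => ∃ hZ : Z.IsIndec, Conn ⟨Z, hZ⟩ X) C ∧
      Nonempty (W.M ≃ₗ[R] A.M × C.M)) ?_ ?_ ?_ W
  · intro W hW
    exact ⟨W, ModA.of R PUnit, hF0 _ _ hW, hT0 _ _ hP,
      ⟨(LinearEquiv.prodUnique (M₂ := PUnit.{u+1})).symm⟩⟩
  · intro W hW
    by_cases h : Conn ⟨W, hW⟩ X
    · exact ⟨W, ModA.of R PUnit, fun N hN k => hN W ⟨hW, h⟩ k, hT0 _ _ hP,
        ⟨(LinearEquiv.prodUnique (M₂ := PUnit.{u+1})).symm⟩⟩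
    · refine ⟨ModA.of R PUnit, W, hF0 _ _ hP, ?_,
        ⟨(LinearEquiv.uniqueProd (M₂ := PUnit.{u+1})).symm⟩⟩
      rintro Z ⟨hZ, hc⟩ k
      by_contra hk
      exact h (Relation.ReflTransGen.head (b := (⟨Z, hZ⟩ : IndecModA R)) ⟨k, hk⟩ hc)
  · rintro W V N ⟨A, B, hA, hB, ⟨e⟩⟩ ⟨A', B', hA', hB', ⟨e'⟩⟩ ⟨e''⟩
    refine ⟨ModA.of R (A.M × A'.M), ModA.of R (B.M × B'.M), ?_, ?_,
      ⟨(e''.trans (e.prodCongr e')).trans (LinearEquiv.prodProdProdComm R _ _ _ _)⟩⟩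
    · intro Z hZ k
      have h1 := hA Z hZ ((LinearMap.fst R A.M A'.M).comp k)
      have h2 := hA' Z hZ ((LinearMap.snd R A.M A'.M).comp k)
      ext z
      exact Prod.ext (LinearMap.congr_fun h1 z) (LinearMap.congr_fun h2 z)
    · intro F hF k
      have h1 := hB F hF (k.comp (LinearMap.inl R B.M B'.M))
      have h2 := hB' F hF (k.comp (LinearMap.inr R B.M B'.M))
      exact LinearMap.prod_ext h1 h2

/-- The pushout of `f` along `φ` is a rigid monomorphism into a torsion module. -/
def MonoInv (Q : ModA R → Prop) {X Y Z : ModA R} (f : X.M →ₗ[R] Y.M) (φ : X.M →ₗ[R] Z.M) :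
    Prop :=
  ∃ (V : ModA R) (u : Y.M →ₗ[R] V.M) (fp : Z.M →ₗ[R] V.M),
    (∀ x, fp (φ x) = u (f x)) ∧ (∀ z v, fp z = u v → ∃ x, z = φ x ∧ v = f x) ∧
    (∀ w, ∃ z v, w = fp z + u v) ∧ Function.Injective fp ∧ torsC Q V ∧ RigidMono Q fp

/-- The pullback of `f` along `φ` is a rigid epimorphism from a cofree module. -/
def EpiInv (Q : ModA R → Prop) {X Y Z : ModA R} (f : X.M →ₗ[R] Y.M) (φ : Z.M →ₗ[R] Y.M) :
    Prop :=
  ∃ (U : ModA R) (a : U.M →ₗ[R] X.M) (fp : U.M →ₗ[R] Z.M),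
    (∀ w, φ (fp w) = f (a w)) ∧ (∀ z x, φ z = f x → ∃ w, fp w = z ∧ a w = x) ∧
    (∀ w, fp w = 0 → a w = 0 → w = 0) ∧ Function.Surjective fp ∧ cofreeC Q U ∧ RigidEpi Q fp

theorem mono_inv_step (Q : ModA R → Prop)
    (hsplit : ∀ W : ModA R, ∃ V N, torsC Q V ∧ freeC Q N ∧ Nonempty (W.M ≃ₗ[R] V.M × N.M))
    {X Y Z Z' : ModA R} {f : X.M →ₗ[R] Y.M} {φ : X.M →ₗ[R] Z.M}
    (hZ : freeC Q Z) (hZ' : freeC Q Z') (g : Z.M →ₗ[R] Z'.M) (hg : IsIrred g)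
    (h : MonoInv Q f φ) : MonoInv (Z := Z') Q f (g.comp φ) := by
  obtain ⟨V, u, f', h1, h2, h3, h4, h5, h6⟩ := h
  obtain ⟨V', f'', u', k1, k2, k3, k4, k5, k6⟩ := mono_step Q hsplit hZ hZ' h5 f' h4 h6 g hg
  refine ⟨V', u'.comp u, f'', ?_, ?_, ?_, k4, k5, k6⟩
  · intro x
    simp [k1, h1]
  · intro z v h
    obtain ⟨z0, rfl, hv⟩ := k2 _ _ h
    obtain ⟨x, rfl, rfl⟩ := h2 _ _ hv.symm
    exact ⟨x, rfl, rfl⟩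
  · intro w
    obtain ⟨z, v1, rfl⟩ := k3 w
    obtain ⟨z0, v, rfl⟩ := h3 v1
    refine ⟨z + g z0, v, ?_⟩
    simp [k1, add_assoc]

theorem epi_inv_step (Q : ModA R → Prop)
    (hsplit : ∀ W : ModA R, ∃ A C, cofreeC Q A ∧ cotorsC Q C ∧ Nonempty (W.M ≃ₗ[R] A.M × C.M))
    {X Y Z Z' : ModA R} {f : X.M →ₗ[R] Y.M} {φ : Z.M →ₗ[R] Y.M}
    (hZ : cotorsC Q Z) (hZ' : cotorsC Q Z') (g : Z'.M →ₗ[R] Z.M) (hg : IsIrred g)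
    (h : EpiInv Q f φ) : EpiInv (Z := Z') Q f (φ.comp g) := by
  obtain ⟨U, a, f', h1, h2, h3, h4, h5, h6⟩ := h
  obtain ⟨U', f'', a', k1, k2, k3, k4, k5, k6⟩ := epi_step Q hsplit hZ hZ' h5 f' h4 h6 g hg
  refine ⟨U', a.comp a', f'', ?_, ?_, ?_, k4, k5, k6⟩
  · intro x
    simp [k1, h1]
  · intro z x h
    obtain ⟨w, hw, rfl⟩ := h2 _ _ h
    obtain ⟨w', rfl, rfl⟩ := k2 _ _ hw.symm
    exact ⟨w', rfl, rfl⟩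
  · intro w hw1 hw2
    refine k3 w hw1 (h3 _ ?_ hw2)
    rw [← k1, hw1, map_zero]

theorem key_mono (X Y : IndecModA R) (f : X.1.M →ₗ[R] Y.1.M) (hf : IsIrred f)
    (hfi : Function.Injective f) (hX : OnARCycle (ARVertex.mk X)) : Conn Y X := by
  by_contra hno
  set Q : ModA R → Prop := fun Z => ∃ hZ : Z.IsIndec, Conn Y ⟨Z, hZ⟩ with hQ
  have hfree : ∀ Z : IndecModA R, Conn Z X → freeC Q Z.1 := by
    rintro Z hZ W ⟨hW, hc⟩ k
    by_contra hk
    exact hno ((Relation.ReflTransGen.tail (b := (⟨W, hW⟩ : IndecModA R)) hc ⟨k, hk⟩).trans hZ)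
  have hXf : freeC Q X.1 := hfree X Relation.ReflTransGen.refl
  have hYQ : Q Y.1 := ⟨Y.2, Relation.ReflTransGen.refl⟩
  have hXn := X.2.1
  have hYn := Y.2.1
  have chain : ∀ y, Relation.TransGen ARArrow (ARVertex.mk X) y →
      Relation.ReflTransGen ARArrow y (ARVertex.mk X) → ∀ Z : IndecModA R, ARVertex.mk Z = y →
      ∃ θ : X.1.M →ₗ[R] Z.1.M, ¬ SplitMonoMap θ ∧
        ∀ φ : X.1.M →ₗ[R] X.1.M, MonoInv Q f φ → MonoInv (Z := Z.1) Q f (θ.comp φ) := by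
    intro y h
    induction h with
    | single h =>
      intro hb Z hZ
      obtain ⟨g, hg⟩ := arr_rep h X Z rfl hZ
      exact ⟨g, hg.1, fun φ hφ => mono_inv_step Q (split_tors Y) hXf
        (hfree Z (conn_of_path hb Z X hZ rfl)) g hg hφ⟩
    | tail h1 h2 ih =>
      intro hb Z hZ
      rename_i b c
      obtain ⟨W, hW⟩ := exists_rep b
      have hb' := Relation.ReflTransGen.head h2 hb
      obtain ⟨θ, hθ, hI⟩ := ih hb' W hW
      obtain ⟨g, hg⟩ := arr_rep h2 W Z hW hZ
      refine ⟨g.comp θ, ?_, fun φ hφ => ?_⟩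
      · rintro ⟨r, hr⟩
        exact hθ ⟨r.comp g, hr⟩
      · exact mono_inv_step Q (split_tors Y) (hfree W (conn_of_path hb' W X hW rfl))
          (hfree Z (conn_of_path hb Z X hZ rfl)) g hg (hI φ hφ)
  obtain ⟨θ, hθ, hI⟩ := chain _ hX Relation.ReflTransGen.refl X rfl
  have hnb : ¬ Function.Bijective θ := by
    intro hb
    apply hθ
    let e := LinearEquiv.ofBijective θ hb
    exact ⟨e.symm.toLinearMap, LinearMap.ext fun x => e.symm_apply_apply x⟩
  obtain ⟨n, hn⟩ := indec_nilp X.2 θ hnb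
  have hpow : ∀ k : ℕ, MonoInv (Z := X.1) Q f (θ ^ k : Module.End R X.1.M) := by
    intro k
    induction k with
    | zero =>
      refine ⟨Y.1, LinearMap.id, f, fun x => rfl, fun z v h => ⟨z, rfl, h.symm⟩,
        fun w => ⟨0, w, by simp⟩, hfi, fun N hN k => hN _ hYQ k, ?_⟩
      intro N hN g h hgh
      rcases hf.2.2 N g h (LinearMap.ext hgh) with ⟨r, hr⟩ | ⟨s, hs⟩
      · exact ⟨r, LinearMap.congr_fun hr⟩
      · exfalso
        have hs0 := hN _ hYQ s
        obtain ⟨y, hy⟩ := exists_ne (0 : Y.1.M)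
        apply hy
        have := LinearMap.congr_fun hs y
        rw [hs0] at this
        simpa using this.symm
    | succ k ih =>
      rw [pow_succ']
      exact hI _ ih
  have h0 := hpow n
  rw [hn] at h0
  obtain ⟨V, u, f', h1, h2, h3, h4, h5, h6⟩ := h0
  obtain ⟨k, hk⟩ := factor_surj (f'.coprod u) (LinearMap.fst R X.1.M Y.1.M) (by
    intro w
    obtain ⟨z, v, rfl⟩ := h3 w
    exact ⟨(z, v), by simp⟩) (by
    rintro ⟨z, v⟩ h
    have h' : f' z + u v = 0 := by simpa using h
    obtain ⟨x, hx, _⟩ := h2 z (-v) (by rw [map_neg]; exact eq_neg_of_add_eq_zero_left h')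
    simpa using hx)
  obtain ⟨x, hx⟩ := exists_ne (0 : X.1.M)
  apply hx
  have := hk (x, 0)
  rw [h5 X.1 hXf k] at this
  simpa using this.symm

theorem key_epi (X Y : IndecModA R) (f : X.1.M →ₗ[R] Y.1.M) (hf : IsIrred f)
    (hfs : Function.Surjective f) (hY : OnARCycle (ARVertex.mk Y)) : Conn Y X := by
  by_contra hno
  set Q : ModA R → Prop := fun Z => ∃ hZ : Z.IsIndec, Conn ⟨Z, hZ⟩ X with hQ
  have hfree : ∀ Z : IndecModA R, Conn Y Z → cotorsC Q Z.1 := by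
    rintro Z hZ W ⟨hW, hc⟩ k
    by_contra hk
    exact hno (hZ.trans (Relation.ReflTransGen.head (b := (⟨W, hW⟩ : IndecModA R)) ⟨k, hk⟩ hc))
  have hYf : cotorsC Q Y.1 := hfree Y Relation.ReflTransGen.refl
  have hXQ : Q X.1 := ⟨X.2, Relation.ReflTransGen.refl⟩
  have hXn := X.2.1
  have hYn := Y.2.1
  have chain : ∀ y, Relation.TransGen ARArrow y (ARVertex.mk Y) →
      Relation.ReflTransGen ARArrow (ARVertex.mk Y) y → ∀ Z : IndecModA R, ARVertex.mk Z = y →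
      ∃ θ : Z.1.M →ₗ[R] Y.1.M, ¬ SplitEpiMap θ ∧
        ∀ φ : Y.1.M →ₗ[R] Y.1.M, EpiInv Q f φ → EpiInv (Z := Z.1) Q f (φ.comp θ) := by
    intro y h
    induction h using Relation.TransGen.head_induction_on with
    | single h =>
      intro hb Z hZ
      obtain ⟨g, hg⟩ := arr_rep h Z Y hZ rfl
      exact ⟨g, hg.2.1, fun φ hφ => epi_inv_step Q (split_cotors X) hYf
        (hfree Z (conn_of_path hb Y Z rfl hZ)) g hg hφ⟩
    | head h2 h1 ih =>
      intro hb Z hZ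
      rename_i c b
      obtain ⟨W, hW⟩ := exists_rep b
      have hb' := hb.tail h2
      obtain ⟨θ, hθ, hI⟩ := ih hb' W hW
      obtain ⟨g, hg⟩ := arr_rep h2 Z W hZ hW
      refine ⟨θ.comp g, ?_, fun φ hφ => ?_⟩
      · rintro ⟨r, hr⟩
        exact hθ ⟨g.comp r, hr⟩
      · exact epi_inv_step Q (split_cotors X) (hfree W (conn_of_path hb' Y W rfl hW))
          (hfree Z (conn_of_path hb Y Z rfl hZ)) g hg (hI φ hφ)
  obtain ⟨θ, hθ, hI⟩ := chain _ hY Relation.ReflTransGen.refl Y rfl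
  have hnb : ¬ Function.Bijective θ := by
    intro hb
    apply hθ
    let e := LinearEquiv.ofBijective θ hb
    exact ⟨e.symm.toLinearMap, LinearMap.ext fun x => e.apply_symm_apply x⟩
  obtain ⟨n, hn⟩ := indec_nilp Y.2 θ hnb
  have hpow : ∀ k : ℕ, EpiInv (Z := Y.1) Q f (θ ^ k : Module.End R Y.1.M) := by
    intro k
    induction k with
    | zero =>
      refine ⟨X.1, LinearMap.id, f, fun x => rfl, fun z x h => ⟨x, h.symm, rfl⟩,
        fun w _ h => h, hfs, fun N hN k => hN _ hXQ k, ?_⟩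
      intro N hN h g hgh
      rcases hf.2.2 N h g (LinearMap.ext hgh) with ⟨r, hr⟩ | ⟨s, hs⟩
      · exfalso
        have hs0 := hN _ hXQ r
        obtain ⟨y, hy⟩ := exists_ne (0 : X.1.M)
        apply hy
        have := LinearMap.congr_fun hr y
        rw [hs0] at this
        simpa using this.symm
      · exact ⟨s, LinearMap.congr_fun hs⟩
    | succ k ih =>
      rw [pow_succ]
      exact hI _ ih
  have h0 := hpow n
  rw [hn] at h0
  obtain ⟨U, a, f', h1, h2, h3, h4, h5, h6⟩ := h0
  obtain ⟨k, hk⟩ := factor_inj (f'.prod a) (LinearMap.inl R Y.1.M X.1.M) (by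
    rw [injective_iff_map_eq_zero]
    intro w hw
    exact h3 w (congrArg Prod.fst hw) (congrArg Prod.snd hw)) (by
    intro z
    obtain ⟨w, hw1, hw2⟩ := h2 z 0 (by simp)
    exact ⟨w, Prod.ext hw1 hw2⟩)
  obtain ⟨x, hx⟩ := exists_ne (0 : Y.1.M)
  apply hx
  have := congrArg Prod.fst (hk x)
  rw [h5 Y.1 hYf k] at this
  simpa using this.symm

theorem key_lemma {x y : ARVertex R} (h : ARArrow x y) (hx : OnARCycle x) (hy : OnARCycle y)
    (X Y : IndecModA R) (hX : ARVertex.mk X = x) (hY : ARVertex.mk Y = y) : Conn Y X := by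
  obtain ⟨f, hf⟩ := arr_rep h X Y hX hY
  subst hX hY
  rcases irred_inj_or_surj hf with h | h
  · exact key_mono X Y f hf h hx
  · exact key_epi X Y f hf h hy

theorem comp_conn {S : Set (ARVertex R)} (hS : S = {x | OnARCycle x}) {x y : ARVertex R}
    (h : Relation.ReflTransGen (fun a b => a ∈ S ∧ b ∈ S ∧ ARStep a b) x y) :
    ∀ X Y : IndecModA R, ARVertex.mk X = x → ARVertex.mk Y = y → Conn X Y := by
  subst hS
  induction h with
  | refl => intro X Y hX hY; exact conn_of_mk_eq (hX.trans hY.symm)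
  | tail _ h ih =>
    rename_i b c _
    intro X Y hX hY
    obtain ⟨Z, hZ⟩ := exists_rep b
    refine (ih X Z hX hZ).trans ?_
    rcases h.2.2 with h' | h'
    · exact conn_of_arr h' Z Y hZ hY
    · exact key_lemma h' h.2.1 h.1 Y Z hY hZ

end KeyLemma


section Final

variable {R : Type u} [Ring R]

/-- There is a nonzero nonisomorphism from `A` to `B`. -/
def SStep (A B : IndecModA R) : Prop :=
  ∃ k : A.1.M →ₗ[R] B.1.M, k ≠ 0 ∧ ¬ Function.Bijective k

theorem conn_strict {A B : IndecModA R} (h : Conn A B) :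
    ∃ B' : IndecModA R, ARVertex.mk B' = ARVertex.mk B ∧ Relation.ReflTransGen SStep A B' := by
  induction h with
  | refl => exact ⟨A, rfl, Relation.ReflTransGen.refl⟩
  | tail _ h ih =>
    rename_i b c _
    obtain ⟨B', hB', hp⟩ := ih
    obtain ⟨k, hk⟩ := h
    by_cases hb : Function.Bijective k
    · exact ⟨B', hB'.trans (mk_eq_of_bij k hb), hp⟩
    · obtain ⟨e⟩ := iso_of_mk_eq hB'
      refine ⟨c, rfl, hp.tail ⟨k.comp e.toLinearMap, ?_, ?_⟩⟩
      · intro h0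
        apply hk
        ext y
        have := LinearMap.congr_fun h0 (e.symm y)
        simpa using this
      · intro h0
        apply hb
        have h1 : Function.Bijective (k ∘ e) := h0
        exact (Function.Bijective.of_comp_iff k e.bijective).mp h1

theorem seq_append {α : Type*} {r : α → α → Prop} {n : ℕ} (c : ℕ → α)
    (hc : ∀ i < n, r (c i) (c (i + 1))) {b : α} (hb : r (c n) b) :
    ∃ c' : ℕ → α, (∀ i ≤ n, c' i = c i) ∧ c' (n + 1) = b ∧
      ∀ i < n + 1, r (c' i) (c' (i + 1)) := by
  refine ⟨fun i => if i ≤ n then c i else b, fun i hi => if_pos hi, if_neg (by omega), ?_⟩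
  intro i hi
  rcases Nat.lt_succ_iff_lt_or_eq.mp hi with h | rfl
  · have h1 : i ≤ n := by omega
    have h2 : i + 1 ≤ n := by omega
    simp only [h1, h2, if_true]
    exact hc i h
  · simpa using hb

theorem seq_of_path {α : Type*} {r : α → α → Prop} {a m b : α}
    (h1 : Relation.ReflTransGen r a m) (h2 : Relation.ReflTransGen r m b) :
    ∃ (n : ℕ) (c : ℕ → α), c 0 = a ∧ c n = b ∧ (∀ i < n, r (c i) (c (i + 1))) ∧
      ∃ j ≤ n, c j = m := by
  induction h2 with
  | refl =>
    induction h1 with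
    | refl => exact ⟨0, fun _ => a, rfl, rfl, by simp, 0, le_rfl, rfl⟩
    | tail _ h ih =>
      obtain ⟨n, c, h0, hn, hs, -⟩ := ih
      obtain ⟨c', k1, k2, k3⟩ := seq_append c hs (by rw [hn]; exact h)
      exact ⟨n + 1, c', (k1 0 (by omega)).trans h0, k2, k3, n + 1, le_rfl, k2⟩
  | tail _ h ih =>
    obtain ⟨n, c, h0, hn, hs, j, hj, hjm⟩ := ih
    obtain ⟨c', k1, k2, k3⟩ := seq_append c hs (by rw [hn]; exact h)
    exact ⟨n + 1, c', (k1 0 (by omega)).trans h0, k2, k3, j, by omega, (k1 j hj).trans hjm⟩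

theorem not_radInf_of_cycle {M₀ : IndecModA R} (hM : IsCycleFiniteModule M₀.1)
    {A B : IndecModA R} (h : A.1.M →ₗ[R] B.1.M) (hne : h ≠ 0) (hnb : ¬ Function.Bijective h)
    (h1 : Conn M₀ A) (h2 : Conn B M₀) : ¬ InRadInf h := by
  intro hinf
  obtain ⟨M₁, hM₁, p1⟩ := conn_strict h2
  obtain ⟨A', hA', p2⟩ := conn_strict ((conn_of_mk_eq hM₁).trans h1)
  obtain ⟨e⟩ := iso_of_mk_eq hA'
  obtain ⟨e₁⟩ := iso_of_mk_eq hM₁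
  obtain ⟨n, c, hc0, hcn, hc, j, hj, hjm⟩ := seq_of_path p1 p2
  let d : ℕ → IndecModA R := fun i => Nat.casesOn i A' c
  have hd : ∀ i : ℕ, i < n + 1 → ∃ k : (d i).1.M →ₗ[R] (d (i + 1)).1.M,
      k ≠ 0 ∧ ¬ Function.Bijective k ∧ (i = 0 → InRadInf k) := by
    intro i hi
    rcases i with _ | i
    · change ∃ k : A'.1.M →ₗ[R] (c 0).1.M, k ≠ 0 ∧ ¬ Function.Bijective k ∧ (0 = 0 → InRadInf k)
      rw [hc0]
      refine ⟨h.comp e.toLinearMap, ?_, ?_, fun _ => inRadInf_pre hinf _⟩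
      · intro h0
        apply hne
        ext y
        have := LinearMap.congr_fun h0 (e.symm y)
        simpa using this
      · intro h0
        apply hnb
        have h1 : Function.Bijective (h ∘ e) := h0
        exact (Function.Bijective.of_comp_iff h e.bijective).mp h1
    · obtain ⟨k, hk1, hk2⟩ := hc i (by omega)
      exact ⟨k, hk1, hk2, fun h => absurd h (Nat.succ_ne_zero i)⟩
  choose k hk1 hk2 hk3 using hd
  let cyc : ModCycle R :=
    { len := n + 1
      len_pos := Nat.succ_pos n
      obj := fun i => (d i).1
      obj_indec := fun i => (d i).2
      closed := congrArg Subtype.val hcn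
      hom := fun i => k i i.2
      hom_ne_zero := fun i => hk1 i i.2
      hom_not_iso := fun i => hk2 i i.2 }
  have hpass : cyc.Passes M₀.1 := by
    refine ⟨⟨j + 1, by change j + 1 < n + 1 + 1; omega⟩, ?_⟩
    change Nonempty ((c j).1.M ≃ₗ[R] M₀.1.M)
    rw [hjm]
    exact ⟨e₁⟩
  exact hM.2 cyc hpass ⟨0, Nat.succ_pos n⟩ (hk3 0 (Nat.succ_pos n) rfl)

theorem path_of_conn {M₀ : IndecModA R} (hM : IsCycleFiniteModule M₀.1)
    {A B : IndecModA R} (h : Conn A B) (h1 : Conn M₀ A) (h2 : Conn B M₀) :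
    Relation.ReflTransGen ARArrow (ARVertex.mk A) (ARVertex.mk B) := by
  induction h with
  | refl => exact Relation.ReflTransGen.refl
  | tail hp h ih =>
    rename_i b c
    have ih' := ih (Relation.ReflTransGen.head h h2)
    obtain ⟨k, hk⟩ := h
    by_cases hb : Function.Bijective k
    · rw [← mk_eq_of_bij k hb]
      exact ih'
    · exact ih'.trans (path_of_not_radInf b c k
        (not_radInf_of_cycle hM k hk hb (h1.trans hp) h2))

theorem mem_of_conn {Γ : Set (ARVertex R)} (hΓ : IsCyclicComponent Γ)
    {M₀ : IndecModA R} (hM : IsCycleFiniteModule M₀.1) (hM₀ : ARVertex.mk M₀ ∈ Γ)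
    {A : IndecModA R} (h1 : Conn M₀ A) (h2 : Conn A M₀) : ARVertex.mk A ∈ Γ := by
  have p1 := path_of_conn hM h1 Relation.ReflTransGen.refl h2
  have p2 := path_of_conn hM h2 h1 Relation.ReflTransGen.refl
  clear h1 h2
  generalize ARVertex.mk A = a at p1 p2 ⊢
  induction p1 with
  | refl => exact hM₀
  | tail hp h ih =>
    exact hΓ.2.2.1 _ (ih (Relation.ReflTransGen.head h p2)) _
      (Relation.TransGen.tail' (p2.trans hp) h) (Or.inl h)

theorem proj_hom {Γ : Set (ARVertex R)} (hs : SincereSet Γ) (P : IndecModA R)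
    (hP : Module.Projective R P.1.M) : ∃ X : IndecModA R, ARVertex.mk X ∈ Γ ∧ HStep P X := by
  have hn := P.2.1
  rcases IsCoatomic.eq_top_or_exists_le_coatom (⊥ : Submodule R P.1.M) with h | ⟨N, hN, -⟩
  · exact absurd h bot_ne_top
  have hS : IsSimpleModule R (P.1.M ⧸ N) := isSimpleModule_iff_isCoatom.mpr hN
  obtain ⟨x, hx, X, rfl, L', L, hL, ⟨e⟩⟩ := hs (P.1.M ⧸ N) hS
  refine ⟨X, hx, ?_⟩
  obtain ⟨k, hk⟩ := Module.projective_lifting_property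
    (e.toLinearMap.comp (L'.comap L.subtype).mkQ) N.mkQ
    (e.surjective.comp (Submodule.mkQ_surjective _))
  refine ⟨L.subtype.comp k, fun h0 => ?_⟩
  apply hN.1
  rw [eq_top_iff]
  intro y _
  have h1 : k y = 0 := Subtype.ext (LinearMap.congr_fun h0 y)
  have h2 := LinearMap.congr_fun hk y
  rw [LinearMap.comp_apply, h1, map_zero] at h2
  exact (Submodule.Quotient.mk_eq_zero N).mp h2.symm

theorem inj_hom {Γ : Set (ARVertex R)} (hs : SincereSet Γ) (I : IndecModA R)
    (hI : Module.Injective R I.1.M) : ∃ X : IndecModA R, ARVertex.mk X ∈ Γ ∧ HStep X I := by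
  have hn := I.2.1
  rcases IsAtomic.eq_bot_or_exists_atom_le (⊤ : Submodule R I.1.M) with h | ⟨N, hN, -⟩
  · exact absurd h.symm bot_ne_top
  have hS : IsSimpleModule R N := isSimpleModule_iff_isAtom.mpr hN
  obtain ⟨x, hx, X, rfl, L', L, hL, ⟨e⟩⟩ := hs N hS
  refine ⟨X, hx, ?_⟩
  obtain ⟨k, hk⟩ := hI.out L.subtype L.injective_subtype
    (N.subtype.comp (e.toLinearMap.comp (L'.comap L.subtype).mkQ))
  refine ⟨k, fun h0 => ?_⟩
  apply hN.1
  rw [eq_bot_iff]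
  intro y hy
  obtain ⟨l, hl⟩ := (e.surjective.comp (Submodule.mkQ_surjective _)) (⟨y, hy⟩ : N)
  have h2 := hk l
  rw [h0] at h2
  have h3 : (N.subtype.comp (e.toLinearMap.comp (L'.comap L.subtype).mkQ)) l = y :=
    congrArg Subtype.val hl
  rw [h3] at h2
  exact h2.symm

theorem main_aux {Γ : Set (ARVertex R)} (hΓ : IsCycleFiniteCyclicComponent Γ)
    (hsincere : SincereSet Γ)
    (m : ℕ) (X : Fin (m + 1) → ModA R) (hind : ∀ i, (X i).IsIndec)
    (f : ∀ i : Fin m, (X i.castSucc).M →ₗ[R] (X i.succ).M)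
    (hne : ∀ i, f i ≠ 0)
    (hinj : Module.Injective R (X 0).M)
    (hproj : Module.Projective R (X (Fin.last m)).M) :
    ∀ i, ARVertex.mk ⟨X i, hind i⟩ ∈ Γ := by
  obtain ⟨hC, x₀, hx₀, M₀, rfl, hM⟩ := hΓ
  obtain ⟨I', hI', hI⟩ := inj_hom hsincere ⟨X 0, hind 0⟩ hinj
  obtain ⟨P', hP', hP⟩ := proj_hom hsincere ⟨X (Fin.last m), hind _⟩ hproj
  have hfrom : ∀ i, Conn M₀ ⟨X i, hind i⟩ := by
    intro i
    induction i using Fin.induction with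
    | zero => exact (comp_conn rfl (hC.2.2.2 _ hx₀ _ hI') M₀ I' rfl rfl).tail hI
    | succ i ih => exact ih.tail ⟨f i, hne i⟩
  have hto : ∀ i, Conn ⟨X i, hind i⟩ M₀ := by
    intro i
    induction i using Fin.reverseInduction with
    | last =>
      exact Relation.ReflTransGen.head hP (comp_conn rfl (hC.2.2.2 _ hP' _ hx₀) P' M₀ rfl rfl)
    | cast i ih =>
      exact Relation.ReflTransGen.head (b := (⟨X i.succ, hind _⟩ : IndecModA R)) ⟨f i, hne i⟩ ih
  exact fun i => mem_of_conn hC hM hx₀ (hfrom i) (hto i)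

end Final


/-- **Key step in the proof of Theorem 2.** Let `B` be a basic indecomposable artin
algebra and `Γ` a sincere cycle-finite finite connected component of `_cΓ_B`. Then for
every path `I = X₀ → X₁ → ⋯ → X_m = P` of nonzero nonisomorphisms in `ind B` from an
indecomposable injective module `I` to an indecomposable projective module `P`, all the
modules `X₀, …, X_m` belong to `Γ`. -/
theorem path_from_injective_to_projective_in_core
    (K B : Type u) [CommRing K] [IsArtinianRing K] [Ring B] [Algebra K B]
    [Module.Finite K B] (hbasic : IsBasicAlgebra B) (hconn : IsConnectedAlgebra B)
    (Γ : Set (ARVertex Bᵐᵒᵖ)) (hΓ : IsCycleFiniteCyclicComponent Γ) (hfin : Γ.Finite)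
    (hsincere : SincereSet Γ)
    (m : ℕ) (hm : 0 < m) (X : Fin (m + 1) → ModA Bᵐᵒᵖ) (hind : ∀ i, (X i).IsIndec)
    (f : ∀ i : Fin m, (X i.castSucc).M →ₗ[Bᵐᵒᵖ] (X i.succ).M)
    (hne : ∀ i, f i ≠ 0) (hni : ∀ i, ¬Function.Bijective (f i))
    (hinj : Module.Injective Bᵐᵒᵖ (X 0).M)
    (hproj : Module.Projective Bᵐᵒᵖ (X (Fin.last m)).M) :
    ∀ i, ARVertex.mk ⟨X i, hind i⟩ ∈ Γ := by
  exact main_aux hΓ hsincere m X hind f hne hinj hproj
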